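/- arXiv:1607.08137 — 2 statements merged into one kernel-verified Lean document; each statement's English description precedes it below -/
import Mathlib

section
/- Take k = 4, n = 7 and the weight vectors (1,1,1,0), (1,1,0,1), (1,0,1,1), (0,1,1,1) each taken twice, together with (1,1,1,1), in the Vandermonde-quotient construction. Then for every δ ≥ 0 the power series F_δ ∈ ℚ[[x₁,…,x₄]] is divisible by Δ = ∏_{1≤i<j≤4}(x_i−x_j), and the resulting series I₀(q) = Σ_{δ≥0} a_δ q^δ with a_δ = (−1)^δ (F_δ/Δ)(0) satisfies {81θ⁴ − 9q(317θ⁴+520θ³+431θ²+171θ+27) + q²(6589θ⁴−7616θ³−31688θ²−28251θ−8370) − q³(5521θ⁴+21384θ³+107223θ²+138402θ+55782) + q⁴(21987θ⁴+130752θ³+152168θ²+9194θ−39016) − 19q⁵(θ+1)(293θ³−7005θ²−18780θ−12535) − 361q⁶(θ+1)(θ+2)(137θ²+357θ+223) − 6859q⁷(θ+1)(θ+2)²(θ+3)} I₀ = 0. -/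
noncomputable section
namespace Stmt12

/-- The multivariable power series ring `ℚ[[x₁,…,x_4]]`. -/
abbrev R := MvPowerSeries (Fin 4) ℚ

/-- The constant `a` in `R`. -/
def Cc (a : ℚ) : R := MvPowerSeries.C a

/-- The pairs `i < j`. -/
def pairs : Finset (Fin 4 × Fin 4) := Finset.univ.filter fun p => p.1 < p.2

/-- The Vandermonde element `Δ = ∏_{i<j}(x_i − x_j)`. -/
def Vand : R := ∏ p ∈ pairs, (MvPowerSeries.X p.1 - MvPowerSeries.X p.2)

/-- The weight vectors. -/
def ws : List (Fin 4 → ℕ) := [![1, 1, 1, 0], ![1, 1, 1, 0], ![1, 1, 0, 1], ![1, 1, 0, 1], ![1, 0, 1, 1], ![1, 0, 1, 1], ![0, 1, 1, 1], ![0, 1, 1, 1], ![1, 1, 1, 1]]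

/-- `n = 7`. -/
def n : ℕ := 7

/-- The term `T_d` of the Vandermonde-quotient construction:
`T_d = ∏_{i<j}(x_i−x_j+d_i−d_j) · ∏_s ∏_{m=1}^{⟨wˢ,d⟩}(⟨wˢ,x⟩+m) · u_d⁻¹`. -/
def T (d : Fin 4 → ℕ) : R :=
  (∏ p ∈ pairs,
      (MvPowerSeries.X p.1 - MvPowerSeries.X p.2 + Cc ((d p.1 : ℚ) - (d p.2 : ℚ)))) *
    (ws.map fun w =>
      ∏ m ∈ Finset.Icc 1 (∑ j, w j * d j),
        ((∑ j, Cc ((w j : ℚ)) * MvPowerSeries.X j) + Cc (m : ℚ))).prod *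
    (∏ j, ∏ m ∈ Finset.Icc 1 (d j), (MvPowerSeries.X j + Cc (m : ℚ)) ^ n)⁻¹

/-- `F_δ = Σ_{d₁+⋯+d_k=δ} T_d`. -/
def F (δ : ℕ) : R :=
  ∑ d ∈ (Fintype.piFinset fun _ : Fin 4 => Finset.range (δ + 1)).filter
      (fun d => ∑ j, d j = δ), T d

/-- The Euler operator `θ = q·d/dq` on `ℚ[[q]]`. -/
def th (f : PowerSeries ℚ) : PowerSeries ℚ :=
  PowerSeries.mk fun d => (d : ℚ) * PowerSeries.coeff d f

/-!
Restricted to a line through the origin with distinct nonzero slopes of sum zero, `Δ` becomes a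
constant times `X ^ 6`, and after multiplying by the square of the product of the four coordinates
`(F_δ / Δ)(0)` becomes, up to a constant and a sign, the coefficient of `X ^ 14` in a sum over the
compositions `d` of `δ` into four parts. As the slopes have sum zero, the weight `(1, 1, 1, 1)`
contributes `δ!` alone and the weight omitting `j` depends only on the single coordinate `j`.

The operator annihilates `∑ S_δ q ^ δ`, where `S_δ` is that coefficient, because for each power
`q ^ k` a Zeilberger-type certificate, symmetric in the three variables it does not single out,
gives `opCoeff N k * S_N = s_k N - s_(k + 1) (N - 1)`: the certificate terms at level `N` are those
at level `N - 1` shifted in one variable, and the boundary terms are divisible by `X ^ 15`. Summing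
over `k` telescopes, and `s_0 = s_8 = 0`.

Divisibility by `Δ` holds because exchanging `d_i` and `d_j` changes the sign of `T_d` on the
diagonal `x_i = x_j`, so that `F_δ` vanishes there.
-/

section Certificate

variable {A : Type*} [CommRing A]

/-- The complete homogeneous symmetric polynomial `h_{l-3}` (zero for `l < 3`) of four quantities
whose elementary symmetric polynomials are `m, a, b, c`. The index is that of the bialternant
formula, where the last row of the Vandermonde determinant is replaced by `l`-th powers. -/
def hsym (m a b c : A) : ℕ → A
  | 0 | 1 | 2 => 0
  | 3 => 1
  | l + 4 => m * hsym m a b c (l + 3) - a * hsym m a b c (l + 2) + b * hsym m a b c (l + 1)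
      - c * hsym m a b c l

/-- The value at `y` of the cubic polynomial with coefficients `p`, constant term first. -/
def cubic (p : Fin 4 → A) (y : A) : A := p 0 + p 1 * y + p 2 * y ^ 2 + p 3 * y ^ 3

/-- The coefficient of `q ^ k` in the Picard–Fuchs operator, as a polynomial in `θ = m`. -/
def opCoeff (m : A) : ℕ → A
  | 0 => 81 * m ^ 4
  | 1 => -9 * (317 * m ^ 4 + 520 * m ^ 3 + 431 * m ^ 2 + 171 * m + 27)
  | 2 => 6589 * m ^ 4 - 7616 * m ^ 3 - 31688 * m ^ 2 - 28251 * m - 8370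
  | 3 => -(5521 * m ^ 4 + 21384 * m ^ 3 + 107223 * m ^ 2 + 138402 * m + 55782)
  | 4 => 21987 * m ^ 4 + 130752 * m ^ 3 + 152168 * m ^ 2 + 9194 * m - 39016
  | 5 => -19 * ((m + 1) * (293 * m ^ 3 - 7005 * m ^ 2 - 18780 * m - 12535))
  | 6 => -361 * ((m + 1) * (m + 2) * (137 * m ^ 2 + 357 * m + 223))
  | 7 => -6859 * ((m + 1) * (m + 2) ^ 2 * (m + 3))
  | _ => 0

-- Numeral exponents with a fixed type keep the elaboration of the tables below fast.
local notation:max x:max "²" => x ^ (2 : ℕ)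
local notation:max x:max "³" => x ^ (3 : ℕ)
local notation:max x:max "⁴" => x ^ (4 : ℕ)
local notation:max x:max "⁵" => x ^ (5 : ℕ)

/-- The telescoping certificate for the coefficient of `q ^ (k - 1)`, at four quantities `yᵢ` with
elementary symmetric polynomials `m, a, b, c`: a polynomial in one of the `yᵢ` over the symmetric
polynomials in all four, reduced modulo the quartic satisfied by that `yᵢ`, hence a cubic. The
numbers come from computer algebra: `opCoeff_mul_eq_trace_add` is a linear system for them. -/
def cert (m a b c : A) : ℕ → Fin 4 → A
  | 1 => ![
    -514962*m⁴*a*b + 1462272*m⁴*c + 1021258*m³*a³ - 1462272*m³*a*b + 208479*m³*a*c - 4741734*m³*b²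
      + 8693530*m²*a²*b - 2924544*m²*a*c + 1462272*m²*b² + 9773913*m²*b*c - 6472421*m*a⁴
      + 2924544*m*a²*b - 7602133*m*a²*c - 8885405*m*a*b² - 580566*m*c² + 11115504*a³*b
      - 2924544*a*b² - 1010486*a*b*c,
    -1519616*m⁴*a² + 1462272*m³*a² - 6546289*m³*a*b - 1462272*m³*c + 12100151*m²*a³
      - 1462272*m²*a*b + 6884848*m²*a*c + 13322601*m²*b² - 2924544*m*a³ - 22825425*m*a²*b
      + 4386816*m*a*c - 18064497*m*b*c - 4643083*a⁴ + 2924544*a²*b + 14254523*a²*c + 9895891*a*b²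
      - 1462272*b*c + 290283*c²,
    501760*m⁵*a - 1462272*m⁴*a - 301056*m⁴*b - 4616192*m³*a² + 1462272*m³*b + 290364*m³*c
      + 2924544*m²*a² + 17754451*m²*a*b - 1462272*m²*c - 1824802*m*a³ - 2924544*m*a*b
      - 16982091*m*a*c - 13322763*m*b² + 6469019*a²*b + 8881842*b*c,
    -501760*m⁴*a + 1462272*m³*a + 301056*m³*b + 5634129*m²*a² - 1462272*m²*b - 290364*m²*c
      - 2924544*m*a² - 9890546*m*a*b + 1462272*m*c - 4644217*a³ + 2924544*a*b + 9096802*a*c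
      + 4440921*b²]
  | 2 => ![
    -1997232*m⁴*a² - 593130*m⁴*a*b - 144*m⁴*b + 499285*m⁴*c + 3714692*m³*a³ - 3600*m³*a²
      + 2975465*m³*a*b + 627060*m³*a*c - 1225943*m³*b² + 144*m³*c - 2079*m²*a³ - 19770936*m²*a²*b
      + 7200*m²*a*b + 2857444*m²*a*c - 961601*m²*b² + 2542534*m²*b*c + 4048176*m*a⁴ - 432*m*a³
      - 1923895*m*a²*b + 10559025*m*a²*c + 5784571*m*a*b² - 3024*m*a*c - 1471974*m*b*c
      + 118311*m*c² - 7477358*a³*b + 288*a²*b + 1925974*a*b² + 1028882*a*b*c - 1728*b*c,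
    2510377*m³*a² - 2439844*m³*a*b + 144*m³*b - 499285*m³*c - 21411709*m²*a³ + 6624*m²*a²
      - 3996211*m²*a*b + 2156758*m²*a*c + 4258917*m²*b² - 144*m²*c + 1928053*m*a³
      + 38496835*m*a²*b - 11952*m*a*b - 2360931*m*a*c + 1469202*m*b² - 5489522*m*b*c + 3429182*a⁴
      + 144*a³ - 1928053*a²*b - 10075274*a²*c - 6813453*a*b² + 2592*a*c + 1728*b² + 964373*b*c
      - 204297*c²,
    -288*m³*a + 11088*m³*b + 83052*m³*c - 1949536*m²*a² + 4860302*m²*a*b + 2592*m²*b - 2772*m²*c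
      + 19462450*m*a³ - 4608*m*a² + 1943992*m*a*b - 5598502*m*a*c - 4553862*m*b² - 864*m*c
      - 18180768*a²*b + 3456*a*b + 3035908*b*c,
    -2934*m²*a² + 288*m²*a - 11088*m²*b - 83052*m²*c + 1932904*m*a² - 1821460*m*a*b - 2592*m*b
      + 2772*m*c - 1281682*a³ + 1152*a² - 1927360*a*b + 2725764*a*c + 1517954*b² + 864*c]
  | 3 => ![
    863083*m⁴*a² + 523916*m⁴*a*b - 3184*m⁴*b - 472631*m⁴*c - 3348267*m³*a³ - 76144*m³*a²
      - 1293159*m³*a*b - 544881*m³*a*c + 1094283*m³*b² + 3184*m³*c - 8220*m²*a³ + 13038153*m²*a²*b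
      + 152000*m²*a*b - 2027163*m²*a*c + 495836*m²*b² - 2465069*m²*b*c - 1899506*m*a⁴ - 9120*m*a³
      + 988932*m*a²*b - 6834281*m*a²*c - 3036714*m*a*b² - 63696*m*a*c + 924627*m*b*c + 211373*m*c²
      + 4240960*a³*b + 6080*a²*b - 980712*a*b² - 945052*a*b*c - 36480*b*c,
    -1280914*m³*a² + 2182011*m³*a*b + 3184*m³*b + 472631*m³*c + 14955427*m²*a³ + 140128*m²*a²
      + 2150741*m²*a*b - 1566110*m²*a*c - 3800210*m²*b² - 3184*m²*c - 972492*m*a³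
      - 25590365*m*a²*b - 252464*m*a*b + 1543572*m*a*c - 935587*m*b² + 4963161*m*b*c - 2341454*a⁴
      + 3040*a³ + 972492*a²*b + 6404734*a²*c + 3981766*a*b² + 54720*a*c + 36480*b² - 484876*b*c
      - 3538*c²,
    -6080*m³*a + 43840*m³*b - 198312*m³*c + 887552*m²*a² - 4316775*m²*a*b + 54720*m²*b
      - 10960*m²*c - 13074320*m*a³ - 97280*m*a² - 909472*m*a*b + 4567735*m*a*c + 4073175*m*b²
      - 18240*m*c + 12036707*a²*b + 72960*a*b - 2715450*b*c,
    9523*m²*a² + 6080*m²*a - 43840*m²*b + 198312*m²*c - 953312*m*a² + 1591802*m*a*b - 54720*m*b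
      + 10960*m*c + 1037613*a³ + 24320*a² + 975232*a*b - 2239386*a*c - 1357725*b² + 18240*c]
  | 4 => ![
    136492*m⁴*a² - 332500*m⁴*a*b - 7600*m⁴*b + 352530*m⁴*c + 2894464*m³*a³ - 117040*m³*a²
      - 235254*m³*a*b + 135968*m³*a*c - 979910*m³*b² + 7600*m³*c + 32262*m²*a³ - 7372848*m²*a²*b
      + 228000*m²*a*b + 1328332*m²*a*c - 159334*m²*b² + 2322564*m²*b*c + 343672*m*a⁴ - 13680*m*a³
      - 307914*m*a²*b + 3426882*m*a²*c + 1048382*m*a*b² - 92720*m*a*c - 339800*m*b*c - 255242*m*c²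
      - 1616140*a³*b + 9120*a²*b + 275652*a*b² + 572964*a*b*c - 54720*b*c,
    958*m³*a² - 2048896*m³*a*b + 7600*m³*b - 352530*m³*c - 9383010*m²*a³ + 215840*m²*a²
      - 125678*m²*a*b + 1913004*m²*a*c + 3361306*m²*b² - 7600*m²*c + 243390*m*a³ + 14434358*m*a²*b
      - 381520*m*a*b - 932786*m*a*c + 382816*m*b² - 4578108*m*b*c + 1272468*a⁴ + 4560*a³
      - 243390*a²*b - 3078076*a²*c - 1621346*a*b² + 82080*a*c + 54720*b² + 116318*b*c + 129390*c²,
    -9120*m³*a - 172064*m³*b + 110808*m³*c + 89984*m²*a² + 3985300*m²*a*b + 82080*m²*b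
      + 43016*m²*c + 7729444*m*a³ - 145920*m*a² - 3952*m*a*b - 4170436*m*a*c - 3594660*m*b²
      - 27360*m*c - 6837352*a²*b + 109440*a*b + 2396440*b*c,
    -15044*m²*a² + 9120*m²*a + 172064*m²*b - 110808*m²*c + 168112*m*a² - 1573816*m*a*b - 82080*m*b
      - 43016*m*c - 892092*a³ + 36480*a² - 254144*a*b + 1980568*a*c + 1198220*b² + 27360*c]
  | 5 => ![
    -393566*m⁴*a² - 3610*m⁴*a*b - 4560*m⁴*b - 130606*m⁴*c - 2028972*m³*a³ - 4560*m³*a²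
      + 545186*m³*a*b + 374205*m³*a*c + 730816*m³*b² + 4560*m³*c - 21660*m²*a³ + 3337540*m²*a²*b
      - 640338*m²*a*c + 21660*m²*b² - 1652449*m²*b*c + 198911*m*a⁴ + 36100*m*a²*b - 825759*m*a²*c
      - 150537*m*a*b² + 4560*m*a*c + 36746*m*b*c - 36252*m*c² + 161728*a³*b - 14440*a*b²
      - 126350*a*b*c,
    407360*m³*a² + 1642645*m³*a*b + 4560*m³*b + 130606*m³*c + 4955181*m²*a³ + 9120*m²*a²
      - 515014*m²*a*b - 2372796*m²*a*c - 2369851*m²*b² - 4560*m²*c + 7220*m*a³ - 6390099*m*a²*b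
      - 4560*m*a*b + 480852*m*a*c - 65626*m*b² + 3374305*m*b*c - 360639*a⁴ - 7220*a²*b
      + 684095*a²*c + 276887*a*b² + 7220*b*c - 46569*c²,
    115520*m³*b + 119852*m³*c - 231040*m²*a² - 2973291*m²*a*b - 28880*m²*c - 3796162*m*a³
      + 173280*m*a*b + 3519123*m*a*c + 2514099*m*b² + 3067873*a²*b - 1676066*b*c,
    37031*m²*a² - 115520*m²*b - 119852*m²*c + 57760*m*a² + 1260194*m*a*b + 28880*m*c + 728289*a³
      - 1566322*a*c - 838033*b²]
  | 6 => ![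
    322012*m⁴*a² + 178334*m⁴*a*b + 361*m⁴*c + 602148*m³*a³ - 466051*m³*a*b - 330676*m³*a*c
      - 252339*m³*b² + 20577*m²*a³ - 791312*m²*a²*b + 309016*m²*a*c - 20577*m²*b² + 533558*m²*b*c
      - 34295*m*a²*b - 35739*m*a²*c + 34295*m*a*b² + 88806*m*b*c + 32851*m*c² - 13718*a³*b
      + 13718*a*b² - 13718*a*b*c,
    -458831*m³*a² - 599260*m³*a*b - 361*m³*c - 1415481*m²*a³ + 684817*m²*a*b + 998526*m²*a*c
      + 673265*m²*b² - 6859*m*a³ + 1590927*m*a²*b - 281219*m*a*c - 61370*m*b² - 994194*m*b*c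
      + 13718*a⁴ + 6859*a²*b - 41154*a²*c - 20577*a*b² - 6859*b*c + 6859*c²,
    -109744*m³*b - 82308*m³*c + 219488*m²*a² + 859902*m²*a*b + 27436*m²*c + 968202*m*a³
      - 164616*m*a*b - 1134262*m*a*c - 695286*m*b² - 736440*a²*b + 463524*b*c,
    -42598*m²*a² + 109744*m²*b + 82308*m²*c - 54872*m*a² - 353780*m*a*b - 27436*m*c - 231762*a³
      + 463524*a*c + 231762*b²]
  | 7 => ![
    6859*m⁴*a² - 6859*m⁴*c - 6859*m³*a³ - 6859*m³*a*b - 6859*m³*a*c + 6859*m³*b² + 20577*m²*a²*b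
      - 6859*m²*a*c - 6859*m²*b*c - 6859*m*a²*c + 6859*m*b*c - 6859*m*c²,
    -13718*m³*a² + 20577*m³*a*b + 6859*m³*c + 20577*m²*a³ + 20577*m²*a*b - 13718*m²*a*c
      - 27436*m²*b² - 34295*m*a²*b - 6859*m*b² + 34295*m*b*c,
    -20577*m²*a*b - 27436*m*a³ + 20577*m*a*c + 20577*m*b² + 20577*a²*b - 13718*b*c,
    -6859*m²*a² + 13718*m*a*b + 6859*a³ - 13718*a*c - 6859*b²]
  | _ => 0

/-- The certificate `cert` after one of the four quantities `yᵢ` is increased by one, again as a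
cubic in `yᵢ` over the symmetric polynomials in the original quantities. -/
def shifted (m a b c : A) : ℕ → Fin 4 → A
  | 1 => ![
    3402*m^6 + 11340*m⁵*a - 514962*m⁵*b + 3888*m⁵ + 1029196*m⁴*a² - 514962*m⁴*a*b + 6156*m⁴*a
      - 5184*m⁴*b + 1470047*m⁴*c + 2187*m⁴ + 1021258*m³*a³ + 1782*m³*a² - 1956338*m³*a*b
      + 208479*m³*a*c + 1863*m³*a - 4741734*m³*b² - 1701*m³*b - 10368*m³*c + 648*m³
      - 2032229*m²*a³ + 8693530*m²*a²*b + 243*m²*a² - 486*m²*a*b - 445957*m²*a*c + 243*m²*a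
      + 1448179*m²*b² + 9773913*m²*b*c - 243*m²*b - 6966*m²*c + 81*m² - 6472421*m*a⁴
      + 5459748*m*a²*b - 7602133*m*a²*c - 8885405*m*a*b² - 7776*m*a*c - 1997806*m*b*c
      - 580566*m*c² - 2025*m*c + 11115504*a³*b - 505243*a²*c - 2924544*a*b² - 1010486*a*b*c
      - 648*a*c + 1944*b*c + 505243*c² - 243*c,
    -1134*m^6 - 1520750*m⁵*a - 11016*m⁵ - 1519616*m⁴*a² - 36612*m⁴*a + 3050733*m⁴*b - 10368*m⁴
      + 3939805*m³*a² - 6546289*m³*a*b - 15957*m³*a + 26487*m³*b - 3989780*m³*c - 5103*m³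
      + 12100151*m²*a³ - 4131*m²*a² - 7501855*m²*a*b + 6884848*m²*a*c - 4131*m²*a + 13322601*m²*b²
      + 11097*m²*b + 5508*m²*c - 1377*m² - 1395290*m*a³ - 22825425*m*a²*b - 486*m*a² + 8748*m*a*b
      + 4921218*m*a*c - 486*m*a + 2025992*m*b² - 18064497*m*b*c + 2511*m*b + 2025*m*c - 162*m
      - 4643083*a⁴ + 894583*a²*b + 14254523*a²*c + 9895891*a*b² + 648*a*b + 1296*a*c - 1944*b²
      - 967559*b*c + 243*b + 290283*c² + 243*c,
    501760*m^6 + 501760*m⁵*a + 8262*m⁵ - 913858*m⁴*a - 301056*m⁴*b + 17010*m⁴ - 4616192*m³*a²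
      + 36531*m³*a - 591745*m³*b + 290364*m³*c + 10854*m³ - 611424*m²*a² + 17754451*m²*a*b
      + 7371*m²*a - 24219*m²*b + 1057703*m²*c + 3888*m² - 1824802*m*a³ - 4860*m*a² + 3147438*m*a*b
      - 16982091*m*a*c + 648*m*a - 13322763*m*b² - 5184*m*b - 1053*m*c + 810*m - 2268*a³
      + 6469019*a²*b - 405*a² + 162*a*b - 1017613*a*c - 1014049*b² + 8881842*b*c - 486*b - 243*c
      + 81,
    -501760*m⁵ - 501760*m⁴*a - 7128*m⁴ + 1932848*m³*a + 301056*m³*b - 9396*m³ + 5634129*m²*a²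
      - 17253*m²*a - 1442266*m²*b - 290364*m²*c - 4374*m² - 1405172*m*a² - 9890546*m*a*b
      - 2754*m*a + 8910*m*b + 960270*m*c - 972*m - 4644217*a³ + 729*a² + 898228*a*b + 9096802*a*c
      - 162*a + 4440921*b² + 972*b - 81*c - 81]
  | 2 => ![
    1717460*m^6 + 6556482*m⁵*a - 593130*m⁵*b - 11703687*m⁵ + 8553714*m⁴*a² - 593130*m⁴*a*b
      - 47188713*m⁴*a - 20481634*m⁴*b + 1126345*m⁴*c - 9225266*m⁴ + 3714692*m³*a³ - 54606945*m³*a²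
      - 43203597*m³*a*b + 627060*m³*a*c - 25305217*m³*a - 1225943*m³*b² + 7519198*m³*b
      + 15860133*m³*c - 23132*m³ - 13847944*m²*a³ - 19770936*m²*a²*b - 16471552*m²*a²
      + 11913518*m²*a*b + 27846554*m²*a*c + 169061*m²*a + 7946592*m²*b² + 2542534*m²*b*c
      + 3897665*m²*b - 9355585*m²*c + 492859*m² + 4048176*m*a⁴ - 432*m*a³ - 3272839*m*a²*b
      + 10559025*m*a²*c + 5784571*m*a*b² - 12350145*m*a*c + 1185818*m*b*c + 118311*m*c²
      - 2763155*m*c - 7477358*a³*b + 288*a²*b + 5773081*a²*c + 1925974*a*b² + 1028882*a*b*c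
      - 12015099*a*c - 991805*b*c - 804724*c² + 2042571*c,
    593130*m^6 + 593130*m⁵*a - 4442965*m⁵ - 36650463*m⁴*a + 605172*m⁴*b + 42185016*m⁴
      - 56164794*m³*a² - 2439844*m³*a*b + 116978758*m³*a + 69323979*m³*b - 1262965*m³*c
      + 37097250*m³ - 21411709*m²*a³ + 102999820*m²*a² + 114212731*m²*a*b + 2156758*m²*a*c
      + 72886834*m²*a + 4258917*m²*b² - 1512902*m²*b - 49464626*m²*c + 3024336*m² + 30968727*m*a³
      + 38496835*m*a²*b + 32943104*m*a² - 11477467*m*a*b - 61045085*m*a*c - 338122*m*a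
      - 19004976*m*b² - 5489522*m*b*c - 5032175*m*b + 5362437*m*c - 985718*m + 3429182*a⁴ + 144*a³
      - 6352190*a²*b - 10075274*a²*c - 6813453*a*b² + 12015099*a*b + 27216*a*c + 991805*b²
      + 827929*b*c - 2042571*b - 204297*c² + 8370*c,
    1153986*m⁵ + 2473774*m⁴*a + 10393791*m⁴ + 63597531*m³*a - 1115952*m³*b + 83052*m³*c
      - 46504186*m³ + 72949525*m²*a² + 4860302*m²*a*b - 87064770*m²*a - 71514127*m²*b
      + 427594*m²*c - 48561273*m² + 19462450*m*a³ - 54528086*m*a² - 84572980*m*a*b - 5598502*m*a*c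
      - 72621172*m*a - 4553862*m*b² - 6183057*m*b + 44311483*m*c - 5979276*m - 9421728*a³
      - 18180768*a²*b - 28486651*a² + 10895073*a*b + 29209748*a*c + 2211632*a + 9849361*b²
      + 3035908*b*c + 3889295*b - 2667093*c + 492859,
    -1747116*m⁴ - 3066904*m³*a - 7668286*m³ - 2934*m²*a² - 35843796*m²*a + 1103910*m²*b
      - 83052*m²*c + 16022857*m² - 28522504*m*a² - 1821460*m*a*b + 10614484*m*a + 25012028*m*b
      - 290974*m*c + 20689289*m - 1281682*a³ - 6187718*a² + 17956928*a*b + 2725764*a*c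
      + 22284770*a + 1517954*b² + 6837002*b - 13047236*c + 2978072]
  | 3 => ![
    -2485184*m^6 - 7794719*m⁵*a + 523916*m⁵*b + 5098174*m⁵ - 8657802*m⁴*a² + 523916*m⁴*a*b
      + 27319227*m⁴*a + 15001973*m⁴*b - 1017512*m⁴*c + 3691168*m⁴ - 3348267*m³*a³ + 35560561*m³*a²
      + 30704507*m³*a*b - 544881*m³*a*c + 14246316*m³*a + 1094283*m³*b² - 4129079*m³*b
      - 10585395*m³*c - 1023527*m³ + 10342535*m²*a³ + 13038153*m²*a²*b + 10490215*m²*a²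
      - 8009381*m²*a*b - 18591836*m²*a*c - 702368*m²*a - 5523308*m²*b² - 2465069*m²*b*c
      - 2273369*m²*b + 7116020*m²*c - 489124*m² - 1899506*m*a⁴ - 9120*m*a³ + 1290044*m*a²*b
      - 6834281*m*a²*c - 3036714*m*a*b² + 9027662*m*a*c - 1156043*m*b*c + 211373*m*c²
      + 2363319*m*c + 4240960*a³*b + 6080*a²*b - 3893733*a²*c - 980712*a*b² - 945052*a*b*c
      + 8303783*a*c + 442066*b*c + 676823*c² - 1248798*c,
    -523916*m^6 - 523916*m⁵*a + 5973663*m⁵ + 32094108*m⁴*a - 530471*m⁴*b - 22308714*m⁴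
      + 43318907*m³*a² + 2182011*m³*a*b - 69791651*m³*a - 49950597*m³*b + 1321535*m³*c
      - 19526744*m³ + 14955427*m²*a³ - 67248445*m²*a² - 80591556*m²*a*b - 1566110*m²*a*c
      - 43422628*m²*a - 3800210*m²*b² - 1535201*m²*b + 34538442*m²*c + 160416*m² - 21975114*m*a³
      - 25590365*m*a²*b - 20980430*m*a² + 6978940*m*a*b + 42486252*m*a*c + 1404736*m*a
      + 13183371*m*b² + 4963161*m*b*c + 2183419*m*b - 3619344*m*c + 978248*m - 2341454*a⁴
      + 3040*a³ + 4565113*a²*b + 6404734*a²*c + 3981766*a*b² - 8303783*a*b + 38000*a*c - 442066*b²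
      - 483627*b*c + 1248798*b - 3538*c² + 55782*c,
    -1057408*m⁵ - 2202976*m⁴*a - 9867323*m⁴ - 47851944*m³*a + 868971*m³*b - 198312*m³*c
      + 26903805*m³ - 51359837*m²*a² - 4316775*m²*a*b + 54558985*m²*a + 50330192*m²*b
      - 684287*m²*c + 29228782*m² - 13074320*m*a³ + 36861109*m*a² + 58688120*m*a*b + 4567735*m*a*c
      + 46469627*m*a + 4073175*m*b² + 4844943*m*b - 31092442*m*c + 2749749*m + 6758134*a³
      + 12036707*a²*b + 18793998*a² - 7593155*a*b - 20383715*a*c - 1951166*a - 6697216*b²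
      - 2715450*b*c - 2329151*b + 1878873*c - 489124,
    1581324*m⁴ + 2726892*m³*a + 6378844*m³ + 9523*m²*a² + 25657795*m²*a - 862416*m²*b
      + 198312*m²*c - 9693265*m² + 19532610*m*a² + 1591802*m*a*b - 6711012*m*a - 17486808*m*b
      + 380264*m*c - 13393206*m + 1037613*a³ + 3892437*a² - 12597796*a*b - 2239386*a*c
      - 14874214*a - 1357725*b² - 4556212*b + 9244635*c - 1886638]
  | 4 => ![
    3030956*m^6 + 8623876*m⁵*a - 332500*m⁵*b + 106202*m⁵ + 8487384*m⁴*a² - 332500*m⁴*a*b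
      - 10762206*m⁴*a - 10506100*m⁴*b + 488498*m⁴*c + 309556*m⁴ + 2894464*m³*a³ - 18849906*m³*a²
      - 20183698*m³*a*b + 135968*m³*a*c - 5388522*m³*a - 979910*m³*b² + 1062036*m³*b
      + 6039718*m³*c + 1398572*m³ - 6665516*m²*a³ - 7372848*m²*a²*b - 5254652*m²*a²
      + 4600064*m²*a*b + 10723184*m²*a*c + 861354*m²*a + 3633188*m²*b² + 2322564*m²*b*c
      + 811494*m²*b - 4840858*m²*c + 360742*m² + 343672*m*a⁴ - 13680*m*a³ + 55974*m*a²*b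
      + 3426882*m*a²*c + 1048382*m*a*b² - 6026374*m*a*c + 827096*m*b*c - 255242*m*c² - 1444478*m*c
      - 1616140*a³*b + 9120*a²*b + 2004770*a²*c + 275652*a*b² + 572964*a*b*c - 4892238*a*c
      + 66986*b*c - 282944*c² + 813722*c,
    332500*m^6 + 332500*m⁵*a - 7343830*m⁵ - 27672110*m⁴*a + 243424*m⁴*b + 5501728*m⁴
      - 31643480*m³*a² - 2048896*m³*a*b + 29737100*m³*a + 33070622*m³*b - 565634*m³*c + 5304720*m³
      - 9383010*m²*a³ + 35894428*m²*a² + 51631318*m²*a*b + 1913004*m²*a*c + 18963424*m²*a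
      + 3361306*m²*b² + 3802024*m²*b - 20924512*m²*c - 2026548*m² + 13275058*m*a³
      + 14434358*m*a²*b + 10509304*m*a² - 3191994*m*a*b - 25694774*m*a*c - 1722708*m*a
      - 8369124*m*b² - 4578108*m*b*c - 178510*m*b + 2591674*m*c - 721484*m + 1272468*a⁴ + 4560*a³
      - 2612048*a²*b - 3078076*a²*c - 1621346*a*b² + 4892238*a*b - 4560*a*c - 66986*b²
      + 173998*b*c - 813722*b + 129390*c² + 39016*c,
    892484*m⁵ + 1852364*m⁴*a + 9144410*m⁴ + 34093650*m³*a - 497736*m³*b + 110808*m³*c - 9916600*m³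
      + 32971802*m²*a² + 3985300*m²*a*b - 25835768*m²*a - 31722570*m²*b + 238956*m²*c
      - 12351830*m² + 7729444*m*a³ - 21238152*m*a² - 36533432*m*a*b - 4170436*m*a*c - 23205760*m*a
      - 3594660*m*b² - 3700114*m*b + 19205026*m*c - 142620*m - 4329120*a³ - 6837352*a²*b
      - 10146890*a² + 4689850*a*b + 12461520*a*c + 1675076*a + 4017786*b² + 2396440*b*c + 772478*b
      - 1300434*c + 360742,
    -1224984*m⁴ - 2184864*m³*a - 4831536*m³ - 15044*m²*a² - 16602900*m²*a + 586812*m²*b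
      - 110808*m²*c + 4308670*m² - 12042832*m*a² - 1573816*m*a*b + 3311256*m*a + 10715532*m*b
      - 161820*m*c + 6737554*m - 892092*a³ - 1837304*a² + 8031088*a*b + 1980568*a*c + 8225396*a
      + 1198220*b² + 2385672*b - 5877716*c + 770596]
  | 5 => ![
    -2422538*m^6 - 6877658*m⁵*a - 3610*m⁵*b - 2125948*m⁵ - 6484092*m⁴*a² - 3610*m⁴*a*b
      + 498902*m⁴*a + 5749970*m⁴*b + 243599*m⁴*c - 1508429*m⁴ - 2028972*m³*a³ + 6141104*m³*a²
      + 10684308*m³*a*b + 374205*m³*a*c + 289047*m³*a + 730816*m³*b² + 654493*m³*b - 2271146*m³*c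
      - 833986*m³ + 2979789*m²*a³ + 3337540*m²*a²*b + 1539893*m²*a² - 1626172*m²*a*b
      - 4519929*m²*a*c - 561165*m²*a - 1958729*m²*b² - 1652449*m²*b*c + 50255*m²*b + 2253818*m²*c
      - 117895*m² + 198911*m*a⁴ - 320568*m*a²*b - 825759*m*a²*c - 150537*m*a*b² + 2954576*m*a*c
      - 486400*m*b*c - 36252*m*c² + 160645*m*c + 161728*a³*b - 466925*a²*c - 14440*a*b²
      - 126350*a*b*c + 1886966*a*c - 382584*b*c - 66215*c² - 603459*c,
    3610*m^6 + 3610*m⁵*a + 6730218*m⁵ + 19733780*m⁴*a + 184623*m⁴*b + 4214124*m⁴ + 19290719*m³*a²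
      + 1642645*m³*a*b - 2951251*m³*a - 17360851*m³*b - 604390*m³*c + 2352789*m³ + 4955181*m²*a³
      - 11904089*m²*a² - 26822471*m²*a*b - 2372796*m²*a*c - 3187383*m²*a - 2369851*m²*b²
      - 3825365*m²*b + 9237876*m²*c + 1827059*m² - 5639010*m*a³ - 6390099*m*a²*b - 3079786*m*a²
      + 297768*m*a*b + 11625302*m*a*c + 1122330*m*a + 4418298*m*b² + 3374305*m*b*c - 261155*m*b
      - 1650663*m*c + 235790*m - 360639*a⁴ + 816373*a²*b + 684095*a²*c + 276887*a*b² - 1886966*a*b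
      + 382584*b² + 45999*b*c + 603459*b - 46569*c² - 238165*c,
    -675450*m⁵ - 1272050*m⁴*a - 7323816*m⁴ - 20631017*m³*a + 48469*m³*b + 119852*m³*c - 1972884*m³
      - 17398034*m²*a² - 2973291*m²*a*b + 4244809*m²*a + 16028001*m²*b + 643929*m²*c + 423168*m²
      - 3796162*m*a³ + 8339442*m*a² + 18462414*m*a*b + 3519123*m*a*c + 5668270*m*a + 2514099*m*b²
      + 2830278*m*b - 9167709*m*c - 1152160*m + 2177856*a³ + 3067873*a²*b + 3426859*a²
      - 2008756*a*b - 5807027*a*c - 1164624*a - 1952953*b² - 1676066*b*c + 288420*b + 527839*c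
      - 117895,
    671840*m⁴ + 1268440*m³*a + 3016136*m³ + 37031*m²*a² + 8443125*m²*a - 229482*m²*b - 119852*m²*c
      - 115292*m² + 5955968*m*a² + 1260194*m*a*b - 661466*m*a - 5085350*m*b - 283138*m*c
      - 1267528*m + 728289*a³ + 378119*a² - 4195428*a*b - 1566322*a*c - 2847454*a - 838033*b²
      - 790400*b + 2869209*c + 159087]
  | 6 => ![
    924160*m^6 + 2628802*m⁵*a + 178334*m⁵*b + 1240757*m⁵ + 2306790*m⁴*a² + 178334*m⁴*a*b
      + 1749767*m⁴*a - 1473602*m⁴*b - 330315*m⁴*c + 724166*m⁴ + 602148*m³*a³ - 123101*m³*a²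
      - 2769953*m³*a*b - 330676*m³*a*c + 723083*m³*a - 252339*m³*b² - 532114*m³*b + 362805*m³*c
      + 147288*m³ - 379772*m²*a³ - 791312*m²*a²*b + 4332*m²*a² - 36822*m²*a*b + 831022*m²*a*c
      + 136097*m²*a + 463524*m²*b² + 533558*m²*b*c - 100719*m²*b - 267501*m²*c - 14801*m²
      - 34295*m*a²*b - 35739*m*a²*c + 34295*m*a*b² - 453777*m*a*c + 256310*m*b*c + 32851*m*c²
      + 219849*m*c - 13718*a³*b - 90611*a²*c + 13718*a*b² - 13718*a*b*c - 115159*a*c + 220571*b*c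
      + 53428*c² + 191691*c,
    -178334*m^6 - 178334*m⁵*a - 3181493*m⁵ - 7429019*m⁴*a - 272916*m⁴*b - 4115400*m⁴
      - 5988990*m³*a² - 599260*m³*a*b - 4378930*m³*a + 4519359*m³*b + 548359*m³*c - 2458410*m³
      - 1415481*m²*a³ + 343672*m²*a² + 7060799*m²*a*b + 998526*m²*a*c - 1580458*m²*a
      + 673265*m²*b² + 1535694*m²*b - 1945790*m²*c - 573268*m² + 793839*m*a³ + 1590927*m*a²*b
      - 8664*m*a² + 527421*m*a*b - 2390181*m*a*c - 272194*m*a - 1197076*m*b² - 994194*m*b*c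
      - 18411*m*b + 367137*m*c + 29602*m + 13718*a⁴ + 97470*a²*b - 41154*a²*c - 20577*a*b²
      + 115159*a*b - 220571*b² - 60287*b*c - 191691*b + 6859*c² + 161006*c,
    373274*m⁵ + 446918*m⁴*a + 3424807*m⁴ + 6842755*m³*a + 31768*m³*b - 82308*m³*c + 4127674*m³
      + 4739569*m²*a² + 859902*m²*a*b + 3290154*m²*a - 4239223*m²*b - 429590*m²*c + 2552631*m²
      + 968202*m*a³ - 771818*m*a² - 4772420*m*a*b - 1134262*m*a*c + 1211516*m*a - 695286*m*b²
      - 1307181*m*b + 2187299*m*c + 704672*m - 490960*a³ - 736440*a²*b - 110827*a² + 183749*a*b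
      + 1251948*a*c + 327788*a + 484101*b² + 463524*b*c - 261725*b + 66063*c - 14801,
    -194940*m⁴ - 268584*m³*a - 1167474*m³ - 42598*m²*a² - 2059144*m²*a + 62814*m²*b + 82308*m²*c
      - 1253031*m² - 1418008*m*a² - 353780*m*a*b - 495292*m*a + 1210072*m*b + 211546*m*c
      - 818387*m - 231762*a³ + 97470*a² + 1091664*a*b + 463524*a*c + 26714*a + 231762*b²
      + 137902*b - 620920*c - 278692]
  | 7 => ![
    -6859*m⁵*a + 13718*m⁵ - 13718*m⁴*a² + 61731*m⁴*a + 20577*m⁴*b - 13718*m⁴*c - 13718*m⁴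
      - 6859*m³*a³ + 75449*m³*a² + 61731*m³*a*b - 6859*m³*a*c + 13718*m³*a + 6859*m³*b²
      - 20577*m³*b - 61731*m³*c - 34295*m³ + 20577*m²*a³ + 20577*m²*a²*b + 20577*m²*a²
      - 20577*m²*a*b - 68590*m²*a*c - 13718*m²*a - 13718*m²*b² - 6859*m²*b*c - 6859*m²*b
      - 13718*m² - 6859*m*a²*c - 13718*m*a*c + 20577*m*b*c - 6859*m*c² + 102885*m*c - 6859*a²*c
      + 6859*a*c + 13718*b*c - 6859*c² + 82308*c,
    -20577*m⁵ + 27436*m⁴*a + 6859*m⁴*b - 150898*m⁴ + 75449*m³*a² + 20577*m³*a*b - 212629*m³*a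
      - 34295*m³*b + 6859*m³*c - 123462*m³ + 20577*m²*a³ - 144039*m²*a² - 123462*m²*a*b
      - 13718*m²*a*c - 96026*m²*a - 27436*m²*b² + 48013*m²*b + 68590*m²*c + 13718*m² - 41154*m*a³
      - 34295*m*a²*b - 41154*m*a² + 54872*m*a*b + 82308*m*a*c + 27436*m*a + 6859*m*b²
      + 34295*m*b*c - 89167*m*b + 68590*m*c + 27436*m + 6859*a²*b - 6859*a*b - 13718*b² + 6859*b*c
      - 82308*b + 82308*c,
    -27436*m⁵ - 27436*m⁴*a - 89167*m⁴ - 150898*m³*a + 20577*m³*b + 75449*m³ - 130321*m²*a²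
      - 20577*m²*a*b + 171475*m²*a + 96026*m²*b - 20577*m²*c + 205770*m² - 27436*m*a³ + 48013*m*a²
      + 137180*m*a*b + 20577*m*a*c + 253783*m*a + 20577*m*b² - 102885*m*b - 27436*m*c + 75449*m
      + 13718*a³ + 20577*a²*b + 27436*a² - 6859*a*b - 48013*a*c + 68590*a - 13718*b² - 13718*b*c
      - 89167*b + 61731*c - 13718,
    27436*m⁴ + 27436*m³*a + 109744*m³ - 6859*m²*a² + 157757*m²*a - 27436*m²*b + 61731*m²
      + 41154*m*a² + 13718*m*a*b + 109744*m*a - 109744*m*b + 27436*m*c - 68590*m + 6859*a³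
      + 6859*a² - 27436*a*b - 13718*a*c + 13718*a - 6859*b² - 54872*b + 48013*c - 54872]
  | _ => 0

/-- The alternant `∑ᵢ minorᵢ · yᵢ ^ 7 · p(yᵢ)` divided by the Vandermonde product, for four
quantities `yᵢ` with elementary symmetric polynomials `m, a, b, c`. -/
def trace (m a b c : A) (p : Fin 4 → A) : A :=
  p 0 * hsym m a b c 7 + p 1 * hsym m a b c 8 + p 2 * hsym m a b c 9 + p 3 * hsym m a b c 10

/-- The alternant `∑ᵢ minorᵢ · (yᵢ ^ 3 + a * yᵢ + (m * a - b)) ^ 2 · p(yᵢ)` divided by the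
Vandermonde product, for four quantities `yᵢ` with elementary symmetric polynomials
`m, a, b, c`. The cubic that is squared is `∏_{j ≠ i} (m - yⱼ)`. -/
def twistedTrace (m a b c : A) (p : Fin 4 → A) : A :=
  ∑ e : Fin 4, p e * (hsym m a b c (e + 6) + 2 * a * hsym m a b c (e + 4) +
    2 * (m * a - b) * hsym m a b c (e + 3) + a ^ 2 * hsym m a b c (e + 2) +
    2 * a * (m * a - b) * hsym m a b c (e + 1) + (m * a - b) ^ 2 * hsym m a b c e)

set_option maxRecDepth 4000 in
set_option maxHeartbeats 4000000 in
/- `y` is one of the four quantities and `s`, `t`, `u` are the elementary symmetric polynomials of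
the other three. -/
theorem cubic_cert_add_one (y s t u : A) (k : ℕ) :
    cubic (cert (y + 1 + s) ((y + 1) * s + t) ((y + 1) * t + u) ((y + 1) * u) k) (y + 1) =
      cubic (shifted (y + s) (y * s + t) (y * t + u) (y * u) k) y := by
  match k with
  | 0 | k + 8 => simp only [cubic, cert, shifted, Pi.zero_apply, zero_mul]
  | 1 | 2 | 3 | 4 | 5 | 6 | 7 => simp only [cubic, cert, shifted, Matrix.cons_val]; ring1

set_option maxRecDepth 4000 in
set_option maxHeartbeats 4000000 in
-- The polynomials normalised by `ring1` have several hundred monomials.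
theorem opCoeff_mul_eq_trace_add (m a b c : A) {k : ℕ} (hk : k < 8) :
    opCoeff m k * m * (a * m ^ 2 - b * m + c) ^ 2 =
      trace m a b c (cert m a b c (k + 1)) + m * twistedTrace m a b c (shifted m a b c k) := by
  interval_cases k <;>
    simp only [opCoeff, hsym, trace, cert, twistedTrace, shifted, Fin.sum_univ_four,
      Matrix.cons_val, Pi.zero_apply] <;>
    ring1

end Certificate

section Alternants

variable {A : Type*} [CommRing A]

/-- The second elementary symmetric polynomial of four quantities. -/
def e2 (y : Fin 4 → A) : A :=
  y 0 * y 1 + y 0 * y 2 + y 0 * y 3 + y 1 * y 2 + y 1 * y 3 + y 2 * y 3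

/-- The third elementary symmetric polynomial of four quantities. -/
def e3 (y : Fin 4 → A) : A :=
  y 0 * y 1 * y 2 + y 0 * y 1 * y 3 + y 0 * y 2 * y 3 + y 1 * y 2 * y 3

/-- The fourth elementary symmetric polynomial of four quantities. -/
def e4 (y : Fin 4 → A) : A := y 0 * y 1 * y 2 * y 3

/-- The Vandermonde product of four quantities. -/
def vdm (y : Fin 4 → A) : A :=
  (y 0 - y 1) * (y 0 - y 2) * (y 0 - y 3) * (y 1 - y 2) * (y 1 - y 3) * (y 2 - y 3)

/-- The cofactors of the cubes in the Vandermonde determinant of four quantities: up to sign, the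
`i`-th one is the Vandermonde product of the quantities other than `y i`. -/
def minor (y : Fin 4 → A) : Fin 4 → A :=
  ![(y 1 - y 2) * (y 1 - y 3) * (y 2 - y 3), -((y 0 - y 2) * (y 0 - y 3) * (y 2 - y 3)),
    (y 0 - y 1) * (y 0 - y 3) * (y 1 - y 3), -((y 0 - y 1) * (y 0 - y 2) * (y 1 - y 2))]

/-- The value at `y i` of the `k`-th certificate of the four quantities `y`. -/
def certAt (k : ℕ) (y : Fin 4 → A) (i : Fin 4) : A :=
  cubic (cert (∑ j, y j) (e2 y) (e3 y) (e4 y) k) (y i)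

/-- The value at `y i` of the `k`-th shifted certificate of the four quantities `y`. -/
def shiftedAt (k : ℕ) (y : Fin 4 → A) (i : Fin 4) : A :=
  cubic (shifted (∑ j, y j) (e2 y) (e3 y) (e4 y) k) (y i)

theorem quartic_eq_zero (y : Fin 4 → A) (i : Fin 4) :
    y i ^ 4 - (∑ j, y j) * y i ^ 3 + e2 y * y i ^ 2 - e3 y * y i + e4 y = 0 := by
  fin_cases i <;> simp [Fin.sum_univ_four, e2, e3, e4] <;> ring

theorem sum_minor_mul_pow (y : Fin 4 → A) :
    ∀ l : ℕ, ∑ i, minor y i * y i ^ l = vdm y * hsym (∑ j, y j) (e2 y) (e3 y) (e4 y) l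
  | 0 | 1 | 2 | 3 => by simp [Fin.sum_univ_four, minor, vdm, hsym]; ring
  | l + 4 => by
    have hrec (i : Fin 4) : minor y i * y i ^ (l + 4) =
        (∑ j, y j) * (minor y i * y i ^ (l + 3)) - e2 y * (minor y i * y i ^ (l + 2))
          + e3 y * (minor y i * y i ^ (l + 1)) - e4 y * (minor y i * y i ^ l) := by
      linear_combination minor y i * y i ^ l * quartic_eq_zero y i
    simp only [hrec, Finset.sum_sub_distrib, Finset.sum_add_distrib, ← Finset.mul_sum,
      sum_minor_mul_pow y l, sum_minor_mul_pow y (l + 1), sum_minor_mul_pow y (l + 2),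
      sum_minor_mul_pow y (l + 3), hsym]
    ring

theorem sum_minor_mul_cubic (y : Fin 4 → A) (p : Fin 4 → A) :
    ∑ i, minor y i * (y i ^ 7 * cubic p (y i)) =
      vdm y * trace (∑ j, y j) (e2 y) (e3 y) (e4 y) p := by
  have hexpand (i : Fin 4) : minor y i * (y i ^ 7 * cubic p (y i)) =
      p 0 * (minor y i * y i ^ 7) + p 1 * (minor y i * y i ^ 8) + p 2 * (minor y i * y i ^ 9) +
        p 3 * (minor y i * y i ^ 10) := by
    rw [cubic]
    ring
  simp only [hexpand, Finset.sum_add_distrib, ← Finset.mul_sum, sum_minor_mul_pow, trace]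
  ring

theorem prod_sub_eq (y : Fin 4 → A) :
    ∏ j, ((∑ j, y j) - y j) = e2 y * (∑ j, y j) ^ 2 - e3 y * (∑ j, y j) + e4 y := by
  simp only [Fin.sum_univ_four, Fin.prod_univ_four, e2, e3, e4]
  ring

theorem prod_erase_sub_eq (y : Fin 4 → A) (i : Fin 4) :
    ∏ j ∈ Finset.univ.erase i, ((∑ j, y j) - y j) =
      y i ^ 3 + e2 y * y i + ((∑ j, y j) * e2 y - e3 y) := by
  have herase : (Finset.univ.erase i : Finset (Fin 4)) = Finset.univ.filter (· ≠ i) := by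
    ext
    simp
  rw [herase, Finset.prod_filter]
  fin_cases i <;> simp [Fin.sum_univ_four, Fin.prod_univ_four, e2, e3] <;> ring

theorem sum_minor_mul_prod_erase_sq_mul_cubic (y : Fin 4 → A) (p : Fin 4 → A) :
    ∑ i, minor y i * ((∏ j ∈ Finset.univ.erase i, ((∑ j, y j) - y j)) ^ 2 * cubic p (y i)) =
      vdm y * twistedTrace (∑ j, y j) (e2 y) (e3 y) (e4 y) p := by
  set m := ∑ j, y j
  set g := m * e2 y - e3 y with hg
  have hcubic (v : A) : cubic p v = ∑ e : Fin 4, p e * v ^ (e : ℕ) := by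
    simp [Fin.sum_univ_four, cubic]
  have hexpand (i : Fin 4) : minor y i * ((y i ^ 3 + e2 y * y i + g) ^ 2 * cubic p (y i)) =
      ∑ e : Fin 4, p e * (minor y i * y i ^ (e + 6 : ℕ)
        + 2 * e2 y * (minor y i * y i ^ (e + 4 : ℕ)) + 2 * g * (minor y i * y i ^ (e + 3 : ℕ))
        + e2 y ^ 2 * (minor y i * y i ^ (e + 2 : ℕ))
        + 2 * e2 y * g * (minor y i * y i ^ (e + 1 : ℕ))
        + g ^ 2 * (minor y i * y i ^ (e : ℕ))) := by
    rw [hcubic, Finset.mul_sum, Finset.mul_sum]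
    refine Finset.sum_congr rfl fun e _ => ?_
    ring
  simp only [prod_erase_sub_eq, ← hg, m, hexpand]
  rw [Finset.sum_comm, twistedTrace, Finset.mul_sum]
  refine Finset.sum_congr rfl fun e _ => ?_
  simp only [← Finset.mul_sum, Finset.sum_add_distrib, sum_minor_mul_pow]
  ring

theorem opCoeff_mul_vdm_eq_sum (y : Fin 4 → A) {k : ℕ} (hk : k < 8) :
    opCoeff (∑ j, y j) k * (∑ j, y j) * (vdm y * (∏ j, ((∑ j, y j) - y j)) ^ 2) =
      ∑ i, minor y i * (y i ^ 7 * certAt (k + 1) y i) +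
        (∑ j, y j) * ∑ i, minor y i *
          ((∏ j ∈ Finset.univ.erase i, ((∑ j, y j) - y j)) ^ 2 * shiftedAt k y i) := by
  simp only [certAt, shiftedAt, sum_minor_mul_cubic, sum_minor_mul_prod_erase_sq_mul_cubic,
    prod_sub_eq]
  linear_combination vdm y * opCoeff_mul_eq_trace_add (∑ j, y j) (e2 y) (e3 y) (e4 y) hk

theorem minor_add_single (y : Fin 4 → A) (i : Fin 4) (v : A) :
    minor (y + Pi.single i v) i = minor y i := by
  fin_cases i <;> simp [minor]

theorem exists_esymm_add_single (y : Fin 4 → A) (i : Fin 4) : ∃ s t u : A, ∀ v : A,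
    ∑ j, (y + Pi.single i v : Fin 4 → A) j = y i + v + s ∧
      e2 (y + Pi.single i v) = (y i + v) * s + t ∧ e3 (y + Pi.single i v) = (y i + v) * t + u ∧
      e4 (y + Pi.single i v) = (y i + v) * u := by
  let z := y ∘ i.succAbove
  refine ⟨z 0 + z 1 + z 2, z 0 * z 1 + z 0 * z 2 + z 1 * z 2, z 0 * z 1 * z 2, fun v => ?_⟩
  fin_cases i <;> refine ⟨?_, ?_, ?_, ?_⟩ <;>
    simp [z, Fin.sum_univ_four, e2, e3, e4, Fin.succAbove, Fin.lt_def] <;> ring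

theorem certAt_add_single (k : ℕ) (y : Fin 4 → A) (i : Fin 4) :
    certAt k (y + Pi.single i 1) i = shiftedAt k y i := by
  obtain ⟨s, t, u, h⟩ := exists_esymm_add_single y i
  obtain ⟨h1, h2, h3, h4⟩ := h 1
  obtain ⟨h1', h2', h3', h4'⟩ := h 0
  simp only [Pi.single_zero, add_zero] at h1' h2' h3' h4'
  rw [certAt, shiftedAt, h1, h2, h3, h4, h1', h2', h3', h4', Pi.add_apply, Pi.single_eq_same,
    cubic_cert_add_one]

end Alternants

section Compositions

open Finset

theorem sum_piAntidiag_filter_ne_zero {ι M : Type*} [Fintype ι] [DecidableEq ι] [AddCommMonoid M]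
    (g : (ι → ℕ) → M) (i : ι) (N : ℕ) :
    ∑ d ∈ piAntidiag univ (N + 1) with d i ≠ 0, g d =
      ∑ d ∈ piAntidiag univ N, g (d + Pi.single i 1) := by
  have hle {d : ι → ℕ} (hd : d i ≠ 0) : Pi.single i 1 ≤ d :=
    update_le_iff.2 ⟨Nat.one_le_iff_ne_zero.2 hd, fun _ _ => Nat.zero_le _⟩
  symm
  refine sum_nbij' (fun d => d + Pi.single i 1) (fun d => d - Pi.single i 1) ?_ ?_ ?_ ?_ ?_
  · intro d hd
    simpa [sum_add_distrib] using hd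
  · intro d hd
    obtain ⟨hsum, hi⟩ : ∑ j, d j = N + 1 ∧ d i ≠ 0 := by simpa using hd
    have : ∑ j, (d - Pi.single i 1 + Pi.single i 1 : ι → ℕ) j = N + 1 := by
      rw [tsub_add_cancel_of_le (hle hi), hsum]
    simpa [sum_add_distrib] using this
  · intro d _
    exact add_tsub_cancel_right d _
  · intro d hd
    exact tsub_add_cancel_of_le (hle (mem_filter.1 hd).2)
  · intro d _
    rfl

theorem F_eq_sum (N : ℕ) : F N = ∑ d ∈ piAntidiag univ N, T d := by
  refine sum_congr (ext fun d => ?_) fun _ _ => rfl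
  simp only [mem_filter, Fintype.mem_piFinset, mem_range, mem_piAntidiag, mem_univ, implies_true,
    and_true, and_iff_right_iff_imp]
  rintro rfl j
  exact Nat.lt_succ_of_le (single_le_sum (fun _ _ => Nat.zero_le _) (mem_univ j))

end Compositions

section Weights

open PowerSeries Finset

/-- The product `(z + 1) ⋯ (z + k)`. -/
def rising {A : Type*} [CommRing A] (z : A) (k : ℕ) : A := ∏ m ∈ Icc 1 k, (z + m)

theorem rising_succ {A : Type*} [CommRing A] (z : A) (k : ℕ) :
    rising z (k + 1) = rising z k * (z + (k + 1 : ℕ)) :=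
  prod_Icc_succ_top (Nat.le_add_left 1 k) _

/-- The invertible factor `u_d` of the construction at the point `x` of a commutative ring. -/
def denom {A : Type*} [CommRing A] (x : Fin 4 → A) (d : Fin 4 → ℕ) : A :=
  ∏ j, rising (x j) (d j) ^ 7

theorem denom_add_single {A : Type*} [CommRing A] (x : Fin 4 → A) (d : Fin 4 → ℕ) (i : Fin 4) :
    denom x (d + Pi.single i 1) = denom x d * (x i + (d i + 1 : ℕ)) ^ 7 := by
  have hother : ∀ j ∈ univ.erase i, rising (x j) ((d + Pi.single i 1 : Fin 4 → ℕ) j) ^ 7 =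
      rising (x j) (d j) ^ 7 := fun j hj => by
    rw [Pi.add_apply, Pi.single_eq_of_ne (ne_of_mem_erase hj), add_zero]
  rw [denom, denom, ← mul_prod_erase _ _ (mem_univ i), prod_congr rfl hother,
    ← mul_prod_erase univ _ (mem_univ i), Pi.add_apply, Pi.single_eq_same, rising_succ]
  ring

theorem map_denom_ne_zero {A K : Type*} [CommRing A] [CommRing K] [IsDomain K] [CharZero K]
    {φ : A →+* K} {x : Fin 4 → A} (hx : ∀ j, φ (x j) = 0) (d : Fin 4 → ℕ) : φ (denom x d) ≠ 0 := by
  simp only [denom, rising, map_prod, map_pow, map_add, hx, map_natCast, zero_add]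
  refine prod_ne_zero_iff.2 fun j _ => pow_ne_zero _ (prod_ne_zero_iff.2 fun m hm => ?_)
  exact Nat.cast_ne_zero.2 (Nat.one_le_iff_ne_zero.1 (mem_Icc.1 hm).1)

/-- The slopes of the line through the origin on which the terms are evaluated: distinct, nonzero
and with sum zero. -/
def slope : Fin 4 → ℚ := ![1, -1, 2, -2]

/-- The generic point of the line with slopes `slope`. -/
def line (j : Fin 4) : ℚ⟦X⟧ := C (slope j) * X

/-- The point `d + line`. -/
def pt (d : Fin 4 → ℕ) (j : Fin 4) : ℚ⟦X⟧ := d j + line j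

/-- The square root of the numerator of `weight`. -/
def weightRoot (N : ℕ) (d : Fin 4 → ℕ) : ℚ⟦X⟧ := ∏ j, ∏ r ∈ range (N - d j), ((r : ℚ⟦X⟧) - line j)

/-- The term of index `d` on the line, up to the factor `vdm (pt d)` and a normalisation that makes
both its numerator and its denominator change by simple factors when `d` moves to the next level. -/
def weight (N : ℕ) (d : Fin 4 → ℕ) : ℚ⟦X⟧ :=
  (-1) ^ N * N.factorial * weightRoot N d ^ 2 * (denom line d)⁻¹

theorem constantCoeff_line (j : Fin 4) : constantCoeff (line j) = 0 := by simp [line]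

theorem constantCoeff_denom_line (d : Fin 4 → ℕ) : constantCoeff (denom line d) ≠ 0 :=
  map_denom_ne_zero constantCoeff_line d

theorem weight_mul_denom (N : ℕ) (d : Fin 4 → ℕ) :
    weight N d * denom line d = (-1) ^ N * N.factorial * weightRoot N d ^ 2 := by
  rw [weight, mul_assoc, PowerSeries.inv_mul_cancel _ (constantCoeff_denom_line d), mul_one]

theorem sum_line : ∑ j, line j = 0 := by
  simp only [line, ← sum_mul, ← map_sum]
  simp [Fin.sum_univ_four, slope]

theorem sum_pt (d : Fin 4 → ℕ) : ∑ j, pt d j = (∑ j, d j : ℕ) := by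
  simp only [pt, sum_add_distrib, sum_line, add_zero, Nat.cast_sum]

theorem pt_add_single (d : Fin 4 → ℕ) (i : Fin 4) :
    pt (d + Pi.single i 1) = pt d + Pi.single i 1 := by
  funext j
  by_cases h : j = i
  · subst h
    simp only [pt, Pi.add_apply, Pi.single_eq_same, Nat.cast_add, Nat.cast_one]
    ring
  · simp [pt, h]

theorem weightRoot_add_single {N : ℕ} {d : Fin 4 → ℕ} (hd : ∑ j, d j = N) (i : Fin 4) :
    weightRoot (N + 1) (d + Pi.single i 1) =
      (∏ j ∈ univ.erase i, ((N : ℚ⟦X⟧) - pt d j)) * weightRoot N d := by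
  have hother : ∀ j ∈ univ.erase i,
      ∏ r ∈ range (N + 1 - (d + Pi.single i 1 : Fin 4 → ℕ) j), ((r : ℚ⟦X⟧) - line j) =
        (N - pt d j) * ∏ r ∈ range (N - d j), ((r : ℚ⟦X⟧) - line j) := fun j hj => by
    have hle : d j ≤ N := hd ▸ single_le_sum (fun _ _ => Nat.zero_le _) (mem_univ j)
    rw [Pi.add_apply, Pi.single_eq_of_ne (ne_of_mem_erase hj), add_zero, Nat.succ_sub hle,
      prod_range_succ, pt, Nat.cast_sub hle]
    ring
  rw [weightRoot, weightRoot, ← mul_prod_erase univ _ (mem_univ i), prod_congr rfl hother,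
    prod_mul_distrib, ← mul_prod_erase univ (fun j => ∏ r ∈ range (N - d j), _) (mem_univ i),
    Pi.add_apply, Pi.single_eq_same, Nat.add_sub_add_right]
  ring

theorem pow_mul_weight_add_single {N : ℕ} {d : Fin 4 → ℕ} (hd : ∑ j, d j = N) (i : Fin 4) :
    (pt d i + 1) ^ 7 * weight (N + 1) (d + Pi.single i 1) =
      -(N + 1) * (∏ j ∈ univ.erase i, ((N : ℚ⟦X⟧) - pt d j)) ^ 2 * weight N d := by
  have hne : denom line d ≠ 0 := fun h => constantCoeff_denom_line d (by rw [h, map_zero])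
  refine mul_right_cancel₀ hne ?_
  have hsucc := weight_mul_denom (N + 1) (d + Pi.single i 1)
  rw [denom_add_single, weightRoot_add_single hd, Nat.factorial_succ] at hsucc
  have hpt : line i + (d i + 1 : ℕ) = pt d i + 1 := by
    rw [pt]
    push_cast
    ring
  rw [hpt] at hsucc
  push_cast at hsucc
  linear_combination hsucc + (N + 1) * (∏ j ∈ univ.erase i, ((N : ℚ⟦X⟧) - pt d j)) ^ 2 *
    weight_mul_denom N d

theorem X_pow_dvd_weight {N : ℕ} {d : Fin 4 → ℕ} {s : Finset (Fin 4)} (hs : ∀ j ∈ s, d j < N) :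
    (X : ℚ⟦X⟧) ^ (2 * #s) ∣ weight N d := by
  refine (Dvd.dvd.mul_left ?_ _).mul_right _
  rw [mul_comm, pow_mul]
  refine pow_dvd_pow_of_dvd ?_ 2
  rw [← prod_const]
  refine (prod_dvd_prod_of_dvd _ _ fun j hj => ?_).trans
    (prod_dvd_prod_of_subset _ _ _ (subset_univ s))
  refine dvd_trans ?_ (dvd_prod_of_mem _ (mem_range.2 (Nat.sub_pos_of_lt (hs j hj))))
  simp [line]

end Weights

section Telescoping

open PowerSeries Finset

theorem X_dvd_cubic_cert {m a b c y : ℚ⟦X⟧} (ha : constantCoeff a = 0) (hb : constantCoeff b = 0)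
    (hc : constantCoeff c = 0) (hy : constantCoeff y = 0) (k : ℕ) :
    X ∣ cubic (cert m a b c k) y := by
  rw [X_dvd_iff]
  match k with
  | 0 | k + 8 => simp [cubic, cert]
  | 1 | 2 | 3 | 4 | 5 | 6 | 7 => simp [cubic, cert, ha, hb, hc, hy]

theorem X_dvd_minor {y : Fin 4 → ℚ⟦X⟧} {i l : Fin 4} (hil : i ≠ l)
    (hy : ∀ j ≠ l, constantCoeff (y j) = 0) : X ∣ minor y i := by
  rw [X_dvd_iff]
  fin_cases i <;> fin_cases l <;> simp_all [minor]

theorem X_dvd_certAt {y : Fin 4 → ℚ⟦X⟧} {i l : Fin 4} (hil : i ≠ l)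
    (hy : ∀ j ≠ l, constantCoeff (y j) = 0) (k : ℕ) : X ∣ certAt k y i := by
  refine X_dvd_cubic_cert ?_ ?_ ?_ (hy i hil) k <;> clear hil <;>
    fin_cases l <;> simp_all [e2, e3, e4]

theorem X_pow_dvd_minor_mul_certAt_mul_weight (k : ℕ) {N : ℕ} {d : Fin 4 → ℕ} (hN : N ≠ 0)
    (hd : ∑ j, d j = N) {i : Fin 4} (hi : d i = 0) :
    (X : ℚ⟦X⟧) ^ 15 ∣ minor (pt d) i * (pt d i ^ 7 * certAt k (pt d) i) * weight N d := by
  have hpow : (X : ℚ⟦X⟧) ^ 7 ∣ pt d i ^ 7 := pow_dvd_pow_of_dvd (by simp [pt, line, hi]) 7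
  by_cases hlt : ∀ j, d j < N
  · have hweight : (X : ℚ⟦X⟧) ^ 8 ∣ weight N d := X_pow_dvd_weight (s := univ) fun j _ => hlt j
    rw [show (15 : ℕ) = 7 + 8 from rfl, pow_add]
    exact mul_dvd_mul ((hpow.mul_right _).mul_left _) hweight
  · obtain ⟨l, hl⟩ := not_forall.1 hlt
    have hzero : ∀ j ≠ l, d j = 0 := fun j hj => by
      have hsum := add_sum_erase univ d (mem_univ l)
      have hle := single_le_sum (fun _ _ => Nat.zero_le _) (mem_erase.2 ⟨hj, mem_univ j⟩) (f := d)
      lia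
    have hil : i ≠ l := by
      rintro rfl
      lia
    have hconst : ∀ j ≠ l, constantCoeff (pt d j) = 0 := fun j hj => by
      simp [pt, line, hzero j hj]
    have hlt' : ∀ j ∈ univ.erase l, d j < N := fun j hj => by
      rw [hzero j (ne_of_mem_erase hj)]
      lia
    have hweight : (X : ℚ⟦X⟧) ^ 6 ∣ weight N d := by
      simpa using X_pow_dvd_weight hlt'
    rw [show (X : ℚ⟦X⟧) ^ 15 = X * (X ^ 7 * X) * X ^ 6 by ring]
    exact mul_dvd_mul (mul_dvd_mul (X_dvd_minor hil hconst)
      (mul_dvd_mul hpow (X_dvd_certAt hil hconst k))) hweight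

/-- The value at level `N` annihilated by the recurrence: the sum of the terms of degree `N` on the
line, divided by `X ^ 14` and evaluated at the origin. -/
def mainSum (N : ℕ) : ℚ :=
  coeff 14 (∑ d ∈ piAntidiag univ N, vdm (pt d) * (∏ j, ((N : ℚ⟦X⟧) - pt d j)) ^ 2 * weight N d)

/-- The telescoping quantity at level `N` given by the `k`-th shifted certificate. -/
def shiftSum (k N : ℕ) : ℚ :=
  coeff 14 (∑ d ∈ piAntidiag univ N, ∑ i, minor (pt d) i *
    ((∏ j ∈ univ.erase i, ((N : ℚ⟦X⟧) - pt d j)) ^ 2 * shiftedAt k (pt d) i) * weight N d)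

theorem coeff_sum_minor_mul_certAt (k N : ℕ) :
    coeff 14 (∑ d ∈ piAntidiag univ (N + 1),
      ∑ i, minor (pt d) i * (pt d i ^ 7 * certAt k (pt d) i) * weight (N + 1) d) =
        -(N + 1) * shiftSum k N := by
  have hterm (i : Fin 4) : coeff 14 (∑ d ∈ piAntidiag univ (N + 1),
      minor (pt d) i * (pt d i ^ 7 * certAt k (pt d) i) * weight (N + 1) d) =
        -(N + 1 : ℚ) * coeff 14 (∑ d ∈ piAntidiag univ N, minor (pt d) i *
          ((∏ j ∈ univ.erase i, ((N : ℚ⟦X⟧) - pt d j)) ^ 2 * shiftedAt k (pt d) i) *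
            weight N d) := by
    have hboundary : coeff 14 (∑ d ∈ piAntidiag univ (N + 1) with d i = 0,
        minor (pt d) i * (pt d i ^ 7 * certAt k (pt d) i) * weight (N + 1) d) = 0 := by
      refine X_pow_dvd_iff.1 (dvd_sum fun d hd => ?_) 14 (Nat.lt_succ_self 14)
      simp only [mem_filter, mem_piAntidiag] at hd
      exact X_pow_dvd_minor_mul_certAt_mul_weight k N.succ_ne_zero hd.1.1 hd.2
    rw [← sum_filter_add_sum_filter_not _ (fun d => d i = 0), map_add, hboundary, zero_add,
      sum_piAntidiag_filter_ne_zero, ← coeff_C_mul, mul_sum]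
    refine congrArg _ (sum_congr rfl fun d hd => ?_)
    rw [pt_add_single, minor_add_single, certAt_add_single, Pi.add_apply, Pi.single_eq_same]
    simp only [map_neg, map_add, map_natCast, map_one]
    linear_combination minor (pt d) i * shiftedAt k (pt d) i *
      pow_mul_weight_add_single (mem_piAntidiag.1 hd).1 i
  rw [shiftSum, sum_comm, sum_comm (s := piAntidiag univ N), map_sum, map_sum, mul_sum]
  exact sum_congr rfl fun i _ => hterm i

theorem map_opCoeff {A B : Type*} [CommRing A] [CommRing B] (f : A →+* B) (m : A) (k : ℕ) :
    f (opCoeff m k) = opCoeff (f m) k := by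
  match k with
  | 0 | 1 | 2 | 3 | 4 | 5 | 6 | 7 => simp [opCoeff, map_ofNat f]
  | k + 8 => simp [opCoeff]

theorem opCoeff_mul_mainSum_succ {k : ℕ} (hk : k < 8) (N : ℕ) :
    opCoeff ((N + 1 : ℕ) : ℚ) k * mainSum (N + 1) = shiftSum k (N + 1) - shiftSum (k + 1) N := by
  have hterm : ∀ d ∈ piAntidiag univ (N + 1),
      C (opCoeff ((N + 1 : ℕ) : ℚ) k * (N + 1 : ℕ)) *
        (vdm (pt d) * (∏ j, (((N + 1 : ℕ) : ℚ⟦X⟧) - pt d j)) ^ 2 * weight (N + 1) d) =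
      ∑ i, minor (pt d) i * (pt d i ^ 7 * certAt (k + 1) (pt d) i) * weight (N + 1) d +
        C ((N + 1 : ℕ) : ℚ) * ∑ i, minor (pt d) i *
          ((∏ j ∈ univ.erase i, (((N + 1 : ℕ) : ℚ⟦X⟧) - pt d j)) ^ 2 * shiftedAt k (pt d) i) *
            weight (N + 1) d := fun d hd => by
    have h := opCoeff_mul_vdm_eq_sum (pt d) hk
    rw [sum_pt, (mem_piAntidiag.1 hd).1] at h
    rw [map_mul, map_opCoeff, map_natCast, ← sum_mul, ← sum_mul]
    linear_combination weight (N + 1) d * h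
  have hsum := congrArg (coeff 14) (sum_congr rfl hterm)
  rw [← mul_sum, coeff_C_mul, sum_add_distrib, map_add, coeff_sum_minor_mul_certAt, ← mul_sum,
    coeff_C_mul, ← mainSum, ← shiftSum] at hsum
  refine mul_left_cancel₀ (Nat.cast_ne_zero.2 N.succ_ne_zero : ((N + 1 : ℕ) : ℚ) ≠ 0) ?_
  push_cast at hsum ⊢
  linear_combination hsum

end Telescoping

section Recurrence

open PowerSeries Finset

/- `0, -5 * t, 0, 4 * t ^ 2` are the elementary symmetric polynomials of the coordinates of `line`
for `t = X ^ 2`. -/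
theorem exists_twistedTrace_shifted_zero {A : Type*} [CommRing A] (t : A) {k : ℕ} (hk : k < 8) :
    ∃ w : A, twistedTrace 0 (-5 * t) 0 (4 * t ^ 2) (shifted 0 (-5 * t) 0 (4 * t ^ 2) k) =
      16 * opCoeff 0 k * t ^ 4 + t ^ 5 * w := by
  let w : ℕ → A
    | 1 => 103680 + 5887320188 * t
    | 2 => 2249280 - 4529770392 * t
    | 3 => 4560000 + 3291967832 * t
    | 4 => 1915200 - 1958220560 * t
    | 5 => 630939916 * t
    | 6 => -18272376 * t
    | _ => 0
  refine ⟨w k, ?_⟩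
  interval_cases k <;>
    simp [w, shifted, twistedTrace, Fin.sum_univ_four, hsym, opCoeff] <;> ring

theorem vdm_line : vdm line = 72 * X ^ 6 := by
  simp [vdm, line, slope, map_ofNat (C : ℚ →+* ℚ⟦X⟧)]
  ring

theorem e2_line : e2 line = -5 * X ^ 2 := by
  simp [e2, line, slope, map_ofNat (C : ℚ →+* ℚ⟦X⟧)]
  ring

theorem e3_line : e3 line = 0 := by
  simp [e3, line, slope]

theorem e4_line : e4 line = 4 * X ^ 4 := by
  simp [e4, line, slope, map_ofNat (C : ℚ →+* ℚ⟦X⟧)]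
  ring

theorem pt_zero : pt 0 = line := by
  funext j
  simp [pt]

theorem weight_zero : weight 0 0 = 1 := by
  simp [weight, weightRoot, denom, rising]

theorem mainSum_zero : mainSum 0 = 1152 := by
  have h : vdm (pt 0) * (∏ j, (((0 : ℕ) : ℚ⟦X⟧) - pt 0 j)) ^ 2 * weight 0 0 =
      C (1152 : ℚ) * X ^ 14 := by
    rw [pt_zero, weight_zero, Nat.cast_zero, ← sum_line, prod_sub_eq, sum_line, vdm_line, e4_line,
      map_ofNat]
    ring
  rw [mainSum, piAntidiag_zero, sum_singleton, h]
  simp [coeff_X_pow]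

theorem opCoeff_mul_mainSum_zero {k : ℕ} (hk : k < 8) :
    opCoeff 0 k * mainSum 0 = shiftSum k 0 := by
  obtain ⟨w, hw⟩ := exists_twistedTrace_shifted_zero ((X : ℚ⟦X⟧) ^ 2) hk
  have h : ∑ i, minor (pt 0) i * ((∏ j ∈ univ.erase i, (((0 : ℕ) : ℚ⟦X⟧) - pt 0 j)) ^ 2 *
      shiftedAt k (pt 0) i) * weight 0 0 =
        C (1152 * opCoeff 0 k) * X ^ 14 + 72 * w * X ^ 16 := by
    have hsum := sum_minor_mul_prod_erase_sq_mul_cubic line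
      (shifted (∑ j, line j) (e2 line) (e3 line) (e4 line) k)
    have he4 : e4 line = 4 * (X ^ 2) ^ 2 := by rw [e4_line, ← pow_mul]
    simp only [sum_line, vdm_line, e2_line, e3_line, he4, hw] at hsum
    simp only [pt_zero, weight_zero, mul_one, Nat.cast_zero, shiftedAt, sum_line, e2_line, e3_line,
      he4, hsum, map_mul, map_ofNat, map_opCoeff, map_zero]
    ring
  rw [shiftSum, piAntidiag_zero, sum_singleton, h, mainSum_zero, map_add, coeff_C_mul_X_pow,
    coeff_mul_X_pow', if_pos rfl, if_neg (by norm_num), add_zero, mul_comm]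

theorem sum_range_pow_mul_sub {A : Type*} [CommRing A] (x : A) (f : ℕ → A) (n : ℕ) :
    ∑ k ∈ range n, x ^ k * (f k - x * f (k + 1)) = f 0 - x ^ n * f n := by
  simp only [mul_sub, ← mul_assoc, ← pow_succ]
  rw [sum_range_sub' fun k => x ^ k * f k, pow_zero, one_mul]

theorem sum_X_pow_mul_mk_opCoeff_mul_mainSum :
    ∑ k ∈ range 8, X ^ k * (PowerSeries.mk fun N => opCoeff (N : ℚ) k * mainSum N) = 0 := by
  have hterm : ∀ k ∈ range 8, X ^ k * (PowerSeries.mk fun N => opCoeff (N : ℚ) k * mainSum N) =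
      X ^ k * (PowerSeries.mk (shiftSum k) - X * PowerSeries.mk (shiftSum (k + 1))) := by
    intro k hk
    congr 1
    ext (_ | N)
    · simpa using opCoeff_mul_mainSum_zero (mem_range.1 hk)
    · simpa [coeff_succ_X_mul] using opCoeff_mul_mainSum_succ (mem_range.1 hk) N
  have hzero : PowerSeries.mk (shiftSum 0) = 0 := by
    ext
    simp [shiftSum, shiftedAt, shifted, cubic]
  have hlast : PowerSeries.mk (shiftSum 8) = 0 := by
    ext
    simp [shiftSum, shiftedAt, shifted, cubic]
  rw [sum_congr rfl hterm, sum_range_pow_mul_sub, hzero, hlast, mul_zero, sub_zero]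

end Recurrence

section Operator

open PowerSeries Finset

theorem coeff_th (f : ℚ⟦X⟧) (N : ℕ) : coeff N (th f) = N * coeff N f := coeff_mk N _

theorem coeff_ofNat_mul (c : ℕ) [c.AtLeastTwo] (f : ℚ⟦X⟧) (N : ℕ) :
    coeff N ((ofNat(c) : ℚ⟦X⟧) * f) = (ofNat(c) : ℚ) * coeff N f := by
  rw [← coeff_C_mul, map_ofNat]

/-- The series multiplied by `q ^ k` when the Picard–Fuchs operator is applied to `f`. -/
def operatorTerm (f : ℚ⟦X⟧) : ℕ → ℚ⟦X⟧
  | 0 => 81 * th^[4] f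
  | 1 => -(9 * (317 * th^[4] f + 520 * th^[3] f + 431 * th^[2] f + 171 * th f + 27 * f))
  | 2 => 6589 * th^[4] f - 7616 * th^[3] f - 31688 * th^[2] f - 28251 * th f - 8370 * f
  | 3 => -(5521 * th^[4] f + 21384 * th^[3] f + 107223 * th^[2] f + 138402 * th f + 55782 * f)
  | 4 => 21987 * th^[4] f + 130752 * th^[3] f + 152168 * th^[2] f + 9194 * th f - 39016 * f
  | 5 => -(19 * (fun g => th g + g)
      (293 * th^[3] f - 7005 * th^[2] f - 18780 * th f - 12535 * f))
  | 6 => -(361 * (fun g => th g + g) ((fun g => th g + 2 * g)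
      (137 * th^[2] f + 357 * th f + 223 * f)))
  | 7 => -(6859 * (fun g => th g + g) ((fun g => th g + 2 * g) ((fun g => th g + 2 * g)
      (th f + 3 * f))))
  | _ => 0

theorem coeff_operatorTerm (f : ℚ⟦X⟧) (k N : ℕ) :
    coeff N (operatorTerm f k) = opCoeff (N : ℚ) k * coeff N f := by
  match k with
  | 0 | 1 | 2 | 3 | 4 | 5 | 6 | 7 =>
    simp [operatorTerm, opCoeff, coeff_th, coeff_ofNat_mul]
    ring
  | k + 8 => simp [operatorTerm, opCoeff]

theorem sum_X_pow_mul_operatorTerm {f : ℚ⟦X⟧} {c : ℚ} (hf : ∀ N, coeff N f = c * mainSum N) :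
    ∑ k ∈ range 8, X ^ k * operatorTerm f k = 0 := by
  have hterm (k : ℕ) : X ^ k * operatorTerm f k =
      C c * (X ^ k * PowerSeries.mk fun N => opCoeff (N : ℚ) k * mainSum N) := by
    rw [mul_left_comm]
    congr 1
    ext N
    rw [coeff_operatorTerm, hf, coeff_C_mul, coeff_mk, mul_left_comm]
  simp only [hterm, ← mul_sum, sum_X_pow_mul_mk_opCoeff_mul_mainSum, mul_zero]

end Operator

section Terms

open Finset

variable {A : Type*} [CommRing A]

/-- The numerator of the construction, at the point `x` of a commutative ring. -/
def numer (x : Fin 4 → A) (d : Fin 4 → ℕ) : A :=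
  (∏ j, rising (∑ l ∈ univ.erase j, x l) (∑ l ∈ univ.erase j, d l)) ^ 2 *
    rising (∑ j, x j) (∑ j, d j)

theorem prod_pairs {M : Type*} [CommMonoid M] (f : Fin 4 × Fin 4 → M) :
    ∏ p ∈ pairs, f p = f (0, 1) * f (0, 2) * f (0, 3) * f (1, 2) * f (1, 3) * f (2, 3) := by
  have hpairs : pairs = {(0, 1), (0, 2), (0, 3), (1, 2), (1, 3), (2, 3)} := by decide
  rw [hpairs]
  simp [mul_assoc]

theorem prod_map_ws {M : Type*} [CommMonoid M] (f : (Fin 4 → ℕ) → M) :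
    (ws.map f).prod = (∏ j, f (Function.update 1 j 0)) ^ 2 * f 1 := by
  let w (j : Fin 4) : Fin 4 → ℕ := Function.update 1 j 0
  have hws : ws = [w 3, w 3, w 2, w 2, w 1, w 1, w 0, w 0, 1] := by decide
  simp only [hws, List.map_cons, List.map_nil, List.prod_cons, List.prod_nil, Fin.prod_univ_four,
    pow_two, w]
  ac_rfl

theorem sum_update_one_mul {S : Type*} [CommSemiring S] (y : Fin 4 → S) (j : Fin 4) :
    ∑ l, ((Function.update 1 j 0 : Fin 4 → ℕ) l : S) * y l = ∑ l ∈ univ.erase j, y l := by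
  rw [← add_sum_erase _ _ (mem_univ j), Function.update_self, Nat.cast_zero, zero_mul, zero_add]
  refine sum_congr rfl fun l hl => ?_
  rw [Function.update_of_ne (ne_of_mem_erase hl), Pi.one_apply, Nat.cast_one, one_mul]

theorem Cc_natCast (m : ℕ) : Cc m = m := map_natCast MvPowerSeries.C m

theorem Cc_sub (a b : ℚ) : Cc (a - b) = Cc a - Cc b := map_sub MvPowerSeries.C a b

theorem constantCoeff_denom_X (d : Fin 4 → ℕ) :
    MvPowerSeries.constantCoeff (denom (MvPowerSeries.X : Fin 4 → R) d) ≠ 0 :=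
  map_denom_ne_zero MvPowerSeries.constantCoeff_X d

theorem T_mul_denom (d : Fin 4 → ℕ) :
    T d * denom MvPowerSeries.X d =
      vdm (fun j => MvPowerSeries.X j + (d j : R)) * numer MvPowerSeries.X d := by
  have hdenom : ∏ j, ∏ m ∈ Icc 1 (d j), (MvPowerSeries.X j + Cc (m : ℚ)) ^ n =
      denom MvPowerSeries.X d := by
    simp only [denom, rising, Cc_natCast, n, prod_pow]
  have hvdm : ∏ p ∈ pairs, (MvPowerSeries.X p.1 - MvPowerSeries.X p.2 +
      Cc ((d p.1 : ℚ) - (d p.2 : ℚ))) = vdm (fun j => MvPowerSeries.X j + (d j : R)) := by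
    simp only [prod_pairs, Cc_sub, Cc_natCast, vdm]
    ring
  have hnumer : (ws.map fun w => ∏ m ∈ Icc 1 (∑ j, w j * d j),
      ((∑ j, Cc (w j : ℚ) * MvPowerSeries.X j) + Cc (m : ℚ))).prod = numer MvPowerSeries.X d := by
    have hd (j : Fin 4) := sum_update_one_mul d j
    simp only [Nat.cast_id] at hd
    simp only [prod_map_ws, Cc_natCast, sum_update_one_mul, hd, Pi.one_apply, Nat.cast_one, one_mul,
      numer, rising]
  rw [T, hdenom, hvdm, hnumer, mul_assoc, MvPowerSeries.inv_mul_cancel _ (constantCoeff_denom_X d),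
    mul_one]

theorem map_denom (φ : R →+* A) (d : Fin 4 → ℕ) :
    φ (denom MvPowerSeries.X d) = denom (φ ∘ MvPowerSeries.X) d := by
  simp only [denom, rising, map_prod, map_pow, map_add, map_natCast, Function.comp_apply]

theorem map_T_mul_denom (φ : R →+* A) (d : Fin 4 → ℕ) :
    φ (T d) * denom (φ ∘ MvPowerSeries.X) d =
      vdm (fun j => φ (MvPowerSeries.X j) + (d j : A)) * numer (φ ∘ MvPowerSeries.X) d := by
  have h := congrArg φ (T_mul_denom d)
  rw [map_mul, map_mul, map_denom] at h
  rw [h]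
  simp only [vdm, numer, rising, map_mul, map_sub, map_add, map_natCast, map_pow, map_prod, map_sum,
    Function.comp_apply]

end Terms

section Symmetry

open Finset

variable {A : Type*} [CommRing A]

theorem denom_comp_perm (x : Fin 4 → A) (d : Fin 4 → ℕ) (σ : Equiv.Perm (Fin 4)) :
    denom (x ∘ σ) (d ∘ σ) = denom x d :=
  Equiv.prod_comp σ fun j => rising (x j) (d j) ^ 7

theorem sum_erase_comp_perm {M : Type*} [AddCommMonoid M] (y : Fin 4 → M)
    (σ : Equiv.Perm (Fin 4)) (j : Fin 4) :
    ∑ l ∈ univ.erase j, (y ∘ σ) l = ∑ l ∈ univ.erase (σ j), y l :=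
  sum_equiv σ (by simp) fun _ _ => rfl

theorem numer_comp_perm (x : Fin 4 → A) (d : Fin 4 → ℕ) (σ : Equiv.Perm (Fin 4)) :
    numer (x ∘ σ) (d ∘ σ) = numer x d := by
  simp only [numer, sum_erase_comp_perm]
  congr 2
  · exact Equiv.prod_comp σ fun j => rising (∑ l ∈ univ.erase j, x l) (∑ l ∈ univ.erase j, d l)
  · exact Equiv.sum_comp σ x
  · exact Equiv.sum_comp σ d

theorem vdm_comp_swap (y : Fin 4 → A) {i j : Fin 4} (hij : i ≠ j) :
    vdm (y ∘ Equiv.swap i j) = -vdm y := by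
  fin_cases i <;> fin_cases j <;>
    first
    | exact absurd rfl hij
    | (simp [vdm, Equiv.swap_apply_def]; ring)

variable {φ : R →+* A} {i j : Fin 4}

theorem map_T_comp_swap (hij : i ≠ j) (hφ : φ (MvPowerSeries.X i) = φ (MvPowerSeries.X j))
    (d : Fin 4 → ℕ) : φ (T (d ∘ Equiv.swap i j)) = -φ (T d) := by
  have hx : (φ ∘ MvPowerSeries.X) ∘ Equiv.swap i j = φ ∘ MvPowerSeries.X := by
    funext a
    simp only [Function.comp_apply, Equiv.swap_apply_def]
    split_ifs with hi hj
    · rw [hi, hφ]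
    · rw [hj, hφ]
    · rfl
  have hunit : IsUnit (denom (φ ∘ MvPowerSeries.X) d) := by
    rw [← map_denom]
    exact (MvPowerSeries.isUnit_iff_constantCoeff.2 (constantCoeff_denom_X d).isUnit).map φ
  have hdenom := denom_comp_perm (φ ∘ MvPowerSeries.X) d (Equiv.swap i j)
  have hnumer := numer_comp_perm (φ ∘ MvPowerSeries.X) d (Equiv.swap i j)
  have hvdm := vdm_comp_swap (φ ∘ MvPowerSeries.X + fun a => (d a : A)) hij
  have hswap := map_T_mul_denom φ (d ∘ Equiv.swap i j)
  rw [hx] at hdenom hnumer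
  rw [hdenom, hnumer] at hswap
  refine hunit.mul_right_cancel (hswap.trans ?_)
  rw [neg_mul, map_T_mul_denom, ← neg_mul]
  refine congrArg (· * _) (Eq.trans ?_ hvdm)
  congr 1
  funext a
  exact congrArg (· + _) (congrFun hx a).symm

theorem map_F_eq_zero [IsAddTorsionFree A] (hij : i ≠ j)
    (hφ : φ (MvPowerSeries.X i) = φ (MvPowerSeries.X j)) (N : ℕ) : φ (F N) = 0 := by
  refine self_eq_neg.1 ?_
  calc φ (F N) = ∑ d ∈ piAntidiag univ N, φ (T d) := by rw [F_eq_sum, map_sum]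
    _ = ∑ d ∈ piAntidiag univ N, φ (T (d ∘ Equiv.swap i j)) := by
      have hmem (d : Fin 4 → ℕ) (hd : d ∈ piAntidiag univ N) :
          d ∘ Equiv.swap i j ∈ piAntidiag univ N := by
        simpa [Equiv.sum_comp (Equiv.swap i j) d] using hd
      have hinv (d : Fin 4 → ℕ) : (d ∘ Equiv.swap i j) ∘ Equiv.swap i j = d := by
        funext a
        simp
      exact sum_nbij' (· ∘ Equiv.swap i j) (· ∘ Equiv.swap i j) hmem hmem (fun d _ => hinv d)
        (fun d _ => hinv d) fun d _ => by rw [hinv]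
    _ = -φ (F N) := by simp only [map_T_comp_swap hij hφ, sum_neg_distrib, F_eq_sum, map_sum]

end Symmetry

section Specialization

open PowerSeries Finset

theorem hasSubst_line : MvPowerSeries.HasSubst line :=
  MvPowerSeries.hasSubst_of_constantCoeff_zero constantCoeff_line

/-- The restriction of a power series to the line with slopes `slope`. -/
def toLine : R →ₐ[ℚ] ℚ⟦X⟧ := MvPowerSeries.substAlgHom hasSubst_line

theorem toLine_X (j : Fin 4) : toLine (MvPowerSeries.X j) = line j :=
  MvPowerSeries.substAlgHom_X hasSubst_line j

theorem toLine_Cc (a : ℚ) : toLine (Cc a) = C a := toLine.commutes a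

theorem constantCoeff_toLine (G : R) :
    constantCoeff (toLine G) = MvPowerSeries.constantCoeff G := by
  have h : constantCoeff (toLine (G - Cc (MvPowerSeries.constantCoeff G))) = 0 := by
    rw [toLine, MvPowerSeries.substAlgHom_apply]
    refine MvPowerSeries.constantCoeff_subst_eq_zero hasSubst_line constantCoeff_line ?_
    rw [map_sub, Cc, MvPowerSeries.constantCoeff_C, sub_self]
  rw [map_sub, map_sub, toLine_Cc, constantCoeff_C] at h
  exact sub_eq_zero.1 h

theorem toLine_Vand : toLine Vand = 72 * X ^ 6 := by
  rw [← vdm_line, Vand, prod_pairs]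
  simp only [map_mul, map_sub, toLine_X, vdm]

theorem mul_rising {A : Type*} [CommRing A] (z : A) (k : ℕ) :
    z * rising z k = (z + k) * ∏ r ∈ range k, (z + r) := by
  induction k with
  | zero => simp [rising]
  | succ k ih =>
    rw [rising_succ, prod_range_succ, ← mul_assoc, ih]
    ring

theorem rising_zero_left {A : Type*} [CommRing A] (k : ℕ) : rising (0 : A) k = k.factorial := by
  induction k with
  | zero => simp [rising]
  | succ k ih => rw [rising_succ, ih, zero_add, Nat.factorial_succ]; push_cast; ring

theorem prod_line_sq_mul_numer {N : ℕ} {d : Fin 4 → ℕ} (hd : ∑ j, d j = N) :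
    (∏ j, line j) ^ 2 * numer line d =
      N.factorial * ((∏ j, ((N : ℚ⟦X⟧) - pt d j)) * weightRoot N d) ^ 2 := by
  have hline (j : Fin 4) : ∑ l ∈ univ.erase j, line l = -line j := by
    rw [sum_erase_eq_sub (mem_univ j), sum_line, zero_sub]
  have hfactor (j : Fin 4) : -line j * rising (-line j) (∑ l ∈ univ.erase j, d l) =
      (N - pt d j) * ∏ r ∈ range (N - d j), ((r : ℚ⟦X⟧) - line j) := by
    have hsum := add_sum_erase univ d (mem_univ j)
    have hsub : ∑ l ∈ univ.erase j, d l = N - d j := by lia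
    rw [mul_rising, hsub, pt, Nat.cast_sub (by lia)]
    simp only [neg_add_eq_sub]
    ring
  have hsign : ∏ j, line j = ∏ j, -line j := by simp [Fin.prod_univ_four]
  rw [numer, sum_line, rising_zero_left, hd, hsign, ← mul_assoc, ← mul_pow, ← prod_mul_distrib]
  simp only [hline, hfactor, prod_mul_distrib, weightRoot]
  ring

theorem toLine_T_mul {N : ℕ} {d : Fin 4 → ℕ} (hd : ∑ j, d j = N) :
    toLine (T d) * (∏ j, line j) ^ 2 =
      (-1) ^ N * (vdm (pt d) * (∏ j, ((N : ℚ⟦X⟧) - pt d j)) ^ 2 * weight N d) := by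
  have hne : denom line d ≠ 0 := fun h => constantCoeff_denom_line d (by rw [h, map_zero])
  have hX : toLine ∘ MvPowerSeries.X = line := funext toLine_X
  have hpt : (fun j => toLine (MvPowerSeries.X j) + (d j : ℚ⟦X⟧)) = pt d := by
    funext j
    rw [toLine_X, pt, add_comm]
  have hT : toLine (T d) * denom line d = vdm (pt d) * numer line d := by
    rw [← hX, ← hpt]
    exact map_T_mul_denom toLine.toRingHom d
  have hsign : ((-1 : ℚ⟦X⟧) ^ N) ^ 2 = 1 := by rw [pow_right_comm, neg_one_sq, one_pow]
  refine mul_right_cancel₀ hne ?_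
  linear_combination (∏ j, line j) ^ 2 * hT + vdm (pt d) * prod_line_sq_mul_numer hd -
    (-1) ^ N * vdm (pt d) * (∏ j, ((N : ℚ⟦X⟧) - pt d j)) ^ 2 * weight_mul_denom N d -
    vdm (pt d) * (∏ j, ((N : ℚ⟦X⟧) - pt d j)) ^ 2 * N.factorial * weightRoot N d ^ 2 * hsign

theorem mainSum_eq {N : ℕ} {G : R} (hG : F N = Vand * G) :
    (-1) ^ N * mainSum N = 1152 * MvPowerSeries.constantCoeff G := by
  have hprod : ∏ j, line j = 4 * X ^ 4 := by rw [Fin.prod_univ_four, ← e4_line, e4]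
  have hF : C (1152 : ℚ) * (toLine G * X ^ 14) = C ((-1) ^ N : ℚ) * ∑ d ∈ piAntidiag univ N,
      vdm (pt d) * (∏ j, ((N : ℚ⟦X⟧) - pt d j)) ^ 2 * weight N d := by
    calc C (1152 : ℚ) * (toLine G * X ^ 14)
        = toLine (F N) * (∏ j, line j) ^ 2 := by
          rw [hG, map_mul, toLine_Vand, hprod, map_ofNat]
          ring
      _ = _ := by
          rw [F_eq_sum, map_sum, sum_mul, mul_sum, map_pow, map_neg, map_one]
          exact sum_congr rfl fun d hd => toLine_T_mul (mem_piAntidiag.1 hd).1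
  have hcoeff := congrArg (coeff 14) hF
  rw [coeff_C_mul, coeff_C_mul, coeff_mul_X_pow', if_pos le_rfl, Nat.sub_self,
    coeff_zero_eq_constantCoeff_apply, constantCoeff_toLine] at hcoeff
  exact hcoeff.symm

end Specialization

section Divisibility

open MvPowerSeries

variable {σ K : Type*} [CommRing K] [Finite σ]

theorem hasSubst_update [DecidableEq σ] (j : σ) {v : MvPowerSeries σ K}
    (hv : constantCoeff v = 0) : HasSubst (Function.update (X : σ → MvPowerSeries σ K) j v) :=
  hasSubst_of_constantCoeff_zero fun a => by
    by_cases h : a = j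
    · subst h
      simpa using hv
    · simp [h]

theorem coeff_subst_update_zero [DecidableEq σ] {j : σ} (g : MvPowerSeries σ K) {e : σ →₀ ℕ}
    (he : e j = 0) :
    coeff e (subst (Function.update (X : σ → MvPowerSeries σ K) j 0) g) = coeff e g := by
  classical
  rw [coeff_subst (hasSubst_update j (map_zero _))]
  have hprod (d : σ →₀ ℕ) (hd : d j = 0) :
      (d.prod fun s m => Function.update (X : σ → MvPowerSeries σ K) j 0 s ^ m) =
        monomial d 1 := by
    rw [monomial_one_eq]
    refine Finsupp.prod_congr fun s hs => ?_
    rw [Function.update_of_ne]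
    rintro rfl
    exact (Finsupp.mem_support_iff.1 hs) hd
  rw [finsum_eq_single _ e]
  · rw [hprod e he, coeff_monomial_same, smul_eq_mul, mul_one]
  · intro d hde
    by_cases hd : d j = 0
    · rw [hprod d hd, coeff_monomial_ne hde.symm, smul_zero]
    · rw [Finsupp.prod, Finset.prod_eq_zero (Finsupp.mem_support_iff.2 hd), map_zero, smul_zero]
      simp [hd]

/-- The substitution `X j ↦ X i`. -/
def identify [DecidableEq σ] (i j : σ) : MvPowerSeries σ K →ₐ[K] MvPowerSeries σ K :=
  substAlgHom (hasSubst_update j (constantCoeff_X i))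

theorem identify_X [DecidableEq σ] (i j a : σ) :
    identify i j (X a : MvPowerSeries σ K) = X (if a = j then i else a) := by
  rw [identify, substAlgHom_X]
  by_cases h : a = j <;> simp [h]

theorem subst_update_subst_update_add [DecidableEq σ] {i j : σ} (hij : i ≠ j)
    (f : MvPowerSeries σ K) {v : MvPowerSeries σ K} (hv : constantCoeff v = 0) :
    subst (Function.update (X : σ → MvPowerSeries σ K) j v)
        (subst (Function.update (X : σ → MvPowerSeries σ K) j (X j + X i)) f) =
      subst (Function.update (X : σ → MvPowerSeries σ K) j (v + X i)) f := by
  have hadd : constantCoeff (X j + X i : MvPowerSeries σ K) = 0 := by simp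
  rw [subst_comp_subst_apply (hasSubst_update j hadd) (hasSubst_update j hv)]
  congr 1
  funext a
  by_cases h : a = j
  · subst h
    simp [subst_add (hasSubst_update a hv), subst_X (hasSubst_update a hv), hij]
  · simp [h, subst_X (hasSubst_update j hv)]

theorem X_sub_X_dvd [DecidableEq σ] {i j : σ} (hij : i ≠ j) {f : MvPowerSeries σ K}
    (hf : identify i j f = 0) : (X i - X j : MvPowerSeries σ K) ∣ f := by
  let g := subst (Function.update (X : σ → MvPowerSeries σ K) j (X j + X i)) f
  have hdvd : X j ∣ g := by
    rw [identify, substAlgHom_apply] at hf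
    rw [X_dvd_iff]
    intro e he
    rw [← coeff_subst_update_zero _ he, subst_update_subst_update_add hij f (map_zero _), zero_add,
      hf, map_zero]
  have hsub : constantCoeff (X j - X i : MvPowerSeries σ K) = 0 := by simp
  have hback : substAlgHom (hasSubst_update j hsub) g = f := by
    rw [substAlgHom_apply, subst_update_subst_update_add hij f hsub, sub_add_cancel,
      Function.update_eq_self, subst_self, id]
  have hX : substAlgHom (hasSubst_update j hsub) (X j : MvPowerSeries σ K) = X j - X i := by
    rw [substAlgHom_X, Function.update_self]
  rw [← neg_dvd, neg_sub, ← hX, ← hback]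
  exact map_dvd _ hdvd

theorem prod_X_sub_X_dvd [IsDomain K] [LinearOrder σ] {f : MvPowerSeries σ K}
    {s : Finset (σ × σ)} (hs : ∀ p ∈ s, p.1 < p.2) (hf : ∀ p ∈ s, identify p.1 p.2 f = 0) :
    ∏ p ∈ s, (X p.1 - X p.2 : MvPowerSeries σ K) ∣ f := by
  induction s using Finset.induction_on with
  | empty => simp
  | insert p s hp ih =>
    obtain ⟨hlt, hs⟩ := (Finset.forall_mem_insert _ _ _).1 hs
    obtain ⟨hfp, hf⟩ := (Finset.forall_mem_insert _ _ _).1 hf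
    obtain ⟨g, rfl⟩ := ih hs hf
    have hg : identify p.1 p.2 g = 0 := by
      rw [map_mul, map_prod] at hfp
      refine (mul_eq_zero.1 hfp).resolve_left (Finset.prod_ne_zero_iff.2 fun q hq => ?_)
      rw [map_sub, identify_X, identify_X, sub_ne_zero, Ne, X_inj]
      have hqlt := hs q hq
      have hne : q ≠ p := fun h => hp (h ▸ hq)
      grind
    rw [Finset.prod_insert hp, mul_comm]
    exact mul_dvd_mul_left _ (X_sub_X_dvd hlt.ne hg)

end Divisibility

theorem Vand_dvd_F (N : ℕ) : Vand ∣ F N := by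
  have : IsAddTorsionFree R := .of_module_rat R
  have hlt : ∀ p ∈ pairs, p.1 < p.2 := fun p hp => (Finset.mem_filter.1 hp).2
  refine prod_X_sub_X_dvd hlt fun p hp => ?_
  refine map_F_eq_zero (φ := (identify p.1 p.2).toRingHom) (hlt p hp).ne ?_ N
  change identify p.1 p.2 (MvPowerSeries.X p.1) = identify p.1 p.2 (MvPowerSeries.X p.2)
  rw [identify_X, identify_X, if_neg (hlt p hp).ne, if_pos rfl]

/-- every `F_δ` is divisible by the Vandermonde `Δ`, and the series
`I₀ = Σ a_δ q^δ` with `a_δ = (−1)^δ·(F_δ/Δ)(0)` is annihilated by the stated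
Picard–Fuchs operator. -/
theorem stmt_12 :
    (∀ δ : ℕ, ∃ G : R, F δ = Vand * G) ∧
    (∀ G : ℕ → R, (∀ δ : ℕ, F δ = Vand * G δ) →
      ∀ I₀ : PowerSeries ℚ,
        I₀ = PowerSeries.mk (fun δ => (-1 : ℚ) ^ δ * MvPowerSeries.constantCoeff (G δ)) →
        81 * th^[4] I₀ - 9 * PowerSeries.X * (317 * th^[4] I₀ + 520 * th^[3] I₀ + 431 * th^[2] I₀ + 171 * th I₀ + 27 * I₀) + PowerSeries.X ^ 2 * (6589 * th^[4] I₀ - 7616 * th^[3] I₀ - 31688 * th^[2] I₀ - 28251 * th I₀ - 8370 * I₀) - PowerSeries.X ^ 3 * (5521 * th^[4] I₀ + 21384 * th^[3] I₀ + 107223 * th^[2] I₀ + 138402 * th I₀ + 55782 * I₀) + PowerSeries.X ^ 4 * (21987 * th^[4] I₀ + 130752 * th^[3] I₀ + 152168 * th^[2] I₀ + 9194 * th I₀ - 39016 * I₀) - 19 * PowerSeries.X ^ 5 * ((fun g => th g + g) (293 * th^[3] I₀ - 7005 * th^[2] I₀ - 18780 * th I₀ - 12535 * I₀)) - 361 *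 PowerSeries.X ^ 6 * ((fun g => th g + g) ((fun g => th g + 2 * g) (137 * th^[2] I₀ + 357 * th I₀ + 223 * I₀))) - 6859 * PowerSeries.X ^ 7 * ((fun g => th g + g) ((fun g => th g + 2 * g) ((fun g => th g + 2 * g) ((fun g => th g + 3 * g) (I₀))))) = 0) := by
  refine ⟨Vand_dvd_F, fun G hG I₀ hI => ?_⟩
  have hcoeff (N : ℕ) : PowerSeries.coeff N I₀ = 1152⁻¹ * mainSum N := by
    have hsign : ((-1 : ℚ) ^ N) ^ 2 = 1 := by rw [pow_right_comm, neg_one_sq, one_pow]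
    rw [hI, PowerSeries.coeff_mk]
    linear_combination -(-1) ^ N / 1152 * mainSum_eq (hG N) + mainSum N / 1152 * hsign
  have hzero := sum_X_pow_mul_operatorTerm hcoeff
  simp only [Finset.sum_range_succ, Finset.sum_range_zero, operatorTerm] at hzero
  linear_combination hzero

end Stmt12
end
end

section
/- Take k = 3, n = 8 and the weight vectors (1,1,0), (1,0,1), (0,1,1) each taken four times in the Vandermonde-quotient construction. Then for every δ ≥ 0 the power series F_δ ∈ ℚ[[x₁,x₂,x₃]] is divisible by Δ = (x₁−x₂)(x₁−x₃)(x₂−x₃), and the resulting series I₀(q) = Σ_{δ≥0} a_δ q^δ with a_δ = (F_δ/Δ)(0) satisfies {529θ⁴ − 23q(850θ⁴+1634θ³+1461θ²+644θ+115) + q²(140191θ⁴+504286θ³+765193θ²+554484θ+160080) − 2q³(225598θ⁴+1145682θ³+2338529θ²+2203584θ+805023) + q⁴(739023θ⁴+4533564θ³+11008538θ²+12265136θ+5219792) − q⁵(683438θ⁴+4503734θ³+11576207θ²+13658100θ+6109137) + q⁶(392337θ⁴+2558982θ³+6275869θ²+6925308θ+2877864) − 4q⁷(36774θ⁴+235086θ³+558499θ²+579748θ+221197)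 + 16q⁸(2081θ⁴+12548θ³+28814θ²+29364θ+11133) − 256q⁹(2θ+3)⁴} I₀ = 0. -/
noncomputable section
namespace Stmt13

/-- The multivariable power series ring `ℚ[[x₁,…,x_3]]`. -/
abbrev R := MvPowerSeries (Fin 3) ℚ

/-- The constant `a` in `R`. -/
def Cc (a : ℚ) : R := MvPowerSeries.C a

/-- The pairs `i < j`. -/
def pairs : Finset (Fin 3 × Fin 3) := Finset.univ.filter fun p => p.1 < p.2

/-- The Vandermonde element `Δ = ∏_{i<j}(x_i − x_j)`. -/
def Vand : R := ∏ p ∈ pairs, (MvPowerSeries.X p.1 - MvPowerSeries.X p.2)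

/-- The weight vectors. -/
def ws : List (Fin 3 → ℕ) := [![1, 1, 0], ![1, 1, 0], ![1, 1, 0], ![1, 1, 0], ![1, 0, 1], ![1, 0, 1], ![1, 0, 1], ![1, 0, 1], ![0, 1, 1], ![0, 1, 1], ![0, 1, 1], ![0, 1, 1]]

/-- `n = 8`. -/
def n : ℕ := 8

/-- The term `T_d` of the Vandermonde-quotient construction:
`T_d = ∏_{i<j}(x_i−x_j+d_i−d_j) · ∏_s ∏_{m=1}^{⟨wˢ,d⟩}(⟨wˢ,x⟩+m) · u_d⁻¹`. -/
def T (d : Fin 3 → ℕ) : R :=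
  (∏ p ∈ pairs,
      (MvPowerSeries.X p.1 - MvPowerSeries.X p.2 + Cc ((d p.1 : ℚ) - (d p.2 : ℚ)))) *
    (ws.map fun w =>
      ∏ m ∈ Finset.Icc 1 (∑ j, w j * d j),
        ((∑ j, Cc ((w j : ℚ)) * MvPowerSeries.X j) + Cc (m : ℚ))).prod *
    (∏ j, ∏ m ∈ Finset.Icc 1 (d j), (MvPowerSeries.X j + Cc (m : ℚ)) ^ n)⁻¹

/-- `F_δ = Σ_{d₁+⋯+d_k=δ} T_d`. -/
def F (δ : ℕ) : R :=
  ∑ d ∈ (Fintype.piFinset fun _ : Fin 3 => Finset.range (δ + 1)).filter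
      (fun d => ∑ j, d j = δ), T d

/-- The Euler operator `θ = q·d/dq` on `ℚ[[q]]`. -/
def th (f : PowerSeries ℚ) : PowerSeries ℚ :=
  PowerSeries.mk fun d => (d : ℚ) * PowerSeries.coeff d f

/-!
Multiplied by the Euler class `∏_{i<j} (x_i + x_j) ^ 4`, each `T_d` becomes a polynomial in the
shifted variables `x_j + d_j` times a hypergeometric factor, and the Picard–Fuchs polynomials times
that polynomial telescope by an explicit certificate. The boundary terms of the telescoping carry a
factor `x_j ^ 8`, so the recurrence holds modulo the ideal `(x_0 ^ 8, x_1 ^ 8, x_2 ^ 8)` after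
multiplication by the Euler class. Since the Euler class times the Vandermonde product is
`32 * x_0 ^ 7 * x_1 ^ 5 * x_2 ^ 3` modulo the larger ideal `(x_0 ^ 8, x_1 ^ 6, x_2 ^ 4)`, whose
socle is spanned by that monomial, the constant coefficients satisfy the recurrence exactly.

Divisibility by the Vandermonde product holds because, with denominators cleared, exchanging
`d_i` and `d_j` pairs the summands of `F_δ` off to zero when `x_i = x_j`.
-/

section Kronecker

open Polynomial

lemma coeff_le_eval_one (p : ℕ[X]) (k : ℕ) : p.coeff k ≤ p.eval 1 := by
  by_cases hk : k ∈ p.support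
  · simpa [eval_eq_sum, sum_def] using Finset.single_le_sum (f := p.coeff) (by simp) hk
  · simp [notMem_support_iff.mp hk]

lemma eq_of_eval_eq_of_eval_one_lt {p q : ℕ[X]} {B : ℕ} (hp : p.eval 1 < B) (hq : q.eval 1 < B)
    (h : p.eval B = q.eval B) : p = q := by
  have eval_divX (r : ℕ[X]) (a : ℕ) : r.eval a = r.coeff 0 + a * r.divX.eval a := by
    conv_lhs => rw [← divX_mul_X_add r]
    simp [add_comm, mul_comm]
  ext k
  induction k generalizing p q with
  | zero =>
    have hmod (r : ℕ[X]) (hr : r.eval 1 < B) : r.eval B % B = r.coeff 0 := by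
      rw [eval_divX, Nat.add_mul_mod_self_left,
        Nat.mod_eq_of_lt ((coeff_le_eval_one r 0).trans_lt hr)]
    rw [← hmod p hp, ← hmod q hq, h]
  | succ k ih =>
    have hdiv (r : ℕ[X]) (hr : r.eval 1 < B) : r.eval B / B = r.divX.eval B := by
      rw [eval_divX, Nat.add_mul_div_left _ _ (Nat.zero_lt_of_lt hr),
        Nat.div_eq_of_lt ((coeff_le_eval_one r 0).trans_lt hr), zero_add]
    have hlt (r : ℕ[X]) (hr : r.eval 1 < B) : r.divX.eval 1 < B := by
      have := eval_divX r 1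
      lia
    rw [← coeff_divX, ← coeff_divX]
    exact ih (hlt p hp) (hlt q hq) (by rw [← hdiv p hp, ← hdiv q hq, h])

/-- Kronecker substitution: a polynomial with natural number coefficients is determined by its value
at a point whose coordinates, from the last to the first, are large enough. -/
lemma mvPolynomial_eq_of_eval_eq_of_eval_lt {m : ℕ} {p q : MvPolynomial (Fin m) ℕ} {B : Fin m → ℕ}
    (hp : ∀ i, MvPolynomial.eval (fun j => if i < j then B j else 1) p < B i)
    (hq : ∀ i, MvPolynomial.eval (fun j => if i < j then B j else 1) q < B i)
    (h : MvPolynomial.eval B p = MvPolynomial.eval B q) : p = q := by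
  induction m with
  | zero =>
    rw [p.eq_C_of_isEmpty, q.eq_C_of_isEmpty] at h ⊢
    simpa using h
  | succ m ih =>
    have heval (r : MvPolynomial (Fin (m + 1)) ℕ) (s : Fin m → ℕ) (a : ℕ) :=
      MvPolynomial.eval_eq_eval_mv_eval' s a r
    have hcons (i : Fin m) : (fun j => if i.succ < j then B j else 1) =
        (Fin.cons 1 fun j => if i < j then Fin.tail B j else 1 : Fin (m + 1) → ℕ) := by
      ext j
      cases j using Fin.cases <;> simp [Fin.tail]
    have hzero : (fun j => if 0 < j then B j else 1) = Fin.cons 1 (Fin.tail B) := by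
      ext j
      cases j using Fin.cases <;> simp [Fin.tail, Fin.succ_pos]
    have hcoeff (r : MvPolynomial (Fin (m + 1)) ℕ)
        (hr : ∀ i, MvPolynomial.eval (fun j => if i < j then B j else 1) r < B i) (k : ℕ) (i) :
        MvPolynomial.eval (fun j => if i < j then Fin.tail B j else 1)
          ((MvPolynomial.finSuccEquiv ℕ m r).coeff k) < Fin.tail B i := by
      refine lt_of_le_of_lt ?_ (hr i.succ)
      rw [hcons, heval, ← Polynomial.coeff_map]
      exact coeff_le_eval_one _ k
    apply (MvPolynomial.finSuccEquiv ℕ m).injective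
    ext1 k
    refine ih (hcoeff p hp k) (hcoeff q hq k) ?_
    rw [← Polynomial.coeff_map, ← Polynomial.coeff_map]
    congr 1
    apply eq_of_eval_eq_of_eval_one_lt (B := B 0)
    · rw [← heval, ← hzero]; exact hp 0
    · rw [← heval, ← hzero]; exact hq 0
    · rw [← heval, ← heval, Fin.cons_self_tail]; exact h

end Kronecker

section Differences

open MvPolynomial

variable {σ A : Type*} [CommRing A]

lemma X_sub_X_dvd_iff [DecidableEq σ] {i j : σ} {f : MvPolynomial σ A} :
    X i - X j ∣ f ↔ rename (Function.update id i j) f = 0 := by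
  constructor
  · rintro ⟨g, rfl⟩
    rcases eq_or_ne j i with rfl | hij
    · simp
    · simp [Function.update_of_ne hij]
  · intro hf
    let I : Ideal (MvPolynomial σ A) := Ideal.span {X i - X j}
    have hmk : Ideal.Quotient.mkₐ A I =
        (Ideal.Quotient.mkₐ A I).comp (rename (Function.update id i j)) := by
      ext k
      rcases eq_or_ne k i with rfl | hk
      · simp [I, Ideal.Quotient.eq]
      · simp [Function.update_of_ne hk]
    have := DFunLike.congr_fun hmk f
    rwa [AlgHom.comp_apply, hf, map_zero, Ideal.Quotient.mkₐ_eq_mk, Ideal.Quotient.eq_zero_iff_mem,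
      Ideal.mem_span_singleton] at this

lemma prime_X_sub_X [IsDomain A] {i j : σ} (hij : i ≠ j) :
    Prime (X i - X j : MvPolynomial σ A) := by
  classical
  refine ⟨sub_ne_zero.mpr fun h => hij (X_injective h), fun h => ?_, fun f g h => ?_⟩
  · exact one_ne_zero ((map_one _).symm.trans (X_sub_X_dvd_iff.mp h.dvd))
  · simpa only [X_sub_X_dvd_iff, map_mul, mul_eq_zero] using h

lemma prod_X_sub_X_dvd [LinearOrder σ] [IsDomain A] [UniqueFactorizationMonoid A]
    {s : Finset (σ × σ)} (hs : ∀ p ∈ s, p.1 < p.2) {f : MvPolynomial σ A}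
    (hf : ∀ p ∈ s, rename (Function.update id p.1 p.2) f = 0) :
    ∏ p ∈ s, (X p.1 - X p.2) ∣ f := by
  refine Finset.prod_dvd_of_isRelPrime (fun p hp q hq hpq => ?_)
    fun p hp => X_sub_X_dvd_iff.mpr (hf p hp)
  rw [Function.onFun, (prime_X_sub_X (hs p hp).ne).irreducible.isRelPrime_iff_not_dvd,
    X_sub_X_dvd_iff, map_sub, rename_X, rename_X, sub_eq_zero, X_inj]
  have hp' := hs p hp
  have hq' := hs q hq
  obtain ⟨i, j⟩ := p
  obtain ⟨k, l⟩ := q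
  grind [Function.update_apply]

end Differences

section Coefficients

open MvPowerSeries

variable {σ A : Type*} [CommSemiring A]

/-- The ideal of the power series ring generated by the powers `x_j ^ e_j` of the variables. -/
def powIdeal (e : σ → ℕ) : Ideal (MvPowerSeries σ A) :=
  Ideal.span (Set.range fun j => X j ^ e j)

lemma X_pow_mem_powIdeal (e : σ → ℕ) (j : σ) : (X j ^ e j : MvPowerSeries σ A) ∈ powIdeal e :=
  Ideal.subset_span ⟨j, rfl⟩

lemma powIdeal_anti {e e' : σ → ℕ} (h : e ≤ e') :
    (powIdeal e' : Ideal (MvPowerSeries σ A)) ≤ powIdeal e := by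
  rw [powIdeal, Ideal.span_le]
  rintro _ ⟨j, rfl⟩
  exact Ideal.mem_of_dvd _ (pow_dvd_pow _ (h j)) (X_pow_mem_powIdeal e j)

lemma coeff_eq_zero_of_mem_powIdeal {e : σ → ℕ} {f : MvPowerSeries σ A} (hf : f ∈ powIdeal e)
    {m : σ →₀ ℕ} (hm : ∀ j, m j < e j) : coeff m f = 0 := by
  obtain ⟨c, rfl⟩ := Finsupp.mem_ideal_span_range_iff_exists_finsupp.mp hf
  rw [Finsupp.sum, map_sum]
  exact Finset.sum_eq_zero fun j _ => X_pow_dvd_iff.mp (Dvd.intro_left _ rfl) m (hm j)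

lemma coeff_ofNat_mul {A : Type*} [Semiring A] (a : ℕ) [a.AtLeastTwo] (f : PowerSeries A) (d : ℕ) :
    PowerSeries.coeff d (ofNat(a) * f) = ofNat(a) * PowerSeries.coeff d f := by
  rw [← map_ofNat (PowerSeries.C (R := A)), PowerSeries.coeff_C_mul]

lemma coeff_X_pow_mul_eq_boole_mul {A : Type*} [Semiring A] (k : ℕ) (f : PowerSeries A) (d : ℕ) :
    PowerSeries.coeff d (PowerSeries.X ^ k * f) =
      (if k ≤ d then 1 else 0) * PowerSeries.coeff (d - k) f := by
  rw [PowerSeries.coeff_X_pow_mul', boole_mul]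

lemma coeff_X_mul_eq_boole_mul {A : Type*} [Semiring A] (f : PowerSeries A) (d : ℕ) :
    PowerSeries.coeff d (PowerSeries.X * f) =
      (if 1 ≤ d then 1 else 0) * PowerSeries.coeff (d - 1) f := by
  simpa only [pow_one] using coeff_X_pow_mul_eq_boole_mul 1 f d

end Coefficients

section Certificate

variable {A A' : Type*} [CommSemiring A] [CommSemiring A']

/-- `(-1) ^ k * picardFuchs k θ` is the coefficient of `q ^ k` in the Picard–Fuchs operator. -/
def picardFuchs (k : ℕ) (θ : A) : A :=
  match k with
  | 0 => 529 * θ ^ 4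
  | 1 => 23 * (850 * θ ^ 4 + 1634 * θ ^ 3 + 1461 * θ ^ 2 + 644 * θ + 115)
  | 2 => 140191 * θ ^ 4 + 504286 * θ ^ 3 + 765193 * θ ^ 2 + 554484 * θ + 160080
  | 3 => 2 * (225598 * θ ^ 4 + 1145682 * θ ^ 3 + 2338529 * θ ^ 2 + 2203584 * θ + 805023)
  | 4 => 739023 * θ ^ 4 + 4533564 * θ ^ 3 + 11008538 * θ ^ 2 + 12265136 * θ + 5219792
  | 5 => 683438 * θ ^ 4 + 4503734 * θ ^ 3 + 11576207 * θ ^ 2 + 13658100 * θ + 6109137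
  | 6 => 392337 * θ ^ 4 + 2558982 * θ ^ 3 + 6275869 * θ ^ 2 + 6925308 * θ + 2877864
  | 7 => 4 * (36774 * θ ^ 4 + 235086 * θ ^ 3 + 558499 * θ ^ 2 + 579748 * θ + 221197)
  | 8 => 16 * (2081 * θ ^ 4 + 12548 * θ ^ 3 + 28814 * θ ^ 2 + 29364 * θ + 11133)
  | 9 => 256 * (2 * θ + 3) ^ 4
  | _ => 0

/-- The polynomials `s_k` of the telescoping certificate, found by solving the linear system that
`picardFuchs_mul_euler_mul_vandermonde` imposes on their coefficients: `(c, i, j, l)` stands for the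
monomial `c * x ^ i * (y + z) ^ j * (x * y + x * z + y * z) ^ l`. -/
def certTerms : ℕ → List (ℤ × ℕ × ℕ × ℕ)
  | 1 =>
    [(-84640, 0, 0, 4), (-75118, 0, 2, 3), (-7406, 0, 4, 2), (368184, 1, 1, 3), (120612, 1, 3, 2),
      (-602002, 2, 2, 2), (-60306, 2, 4, 1), (421084, 3, 3, 1), (-2645, 4, 2, 1),
      (-113206, 4, 4, 0), (-1058, 5, 3, 0), (-529, 6, 2, 0)]
  | 2 =>
    [(5520, 0, 0, 3), (-106352, 0, 0, 4), (-27186, 0, 1, 3), (-8625, 0, 2, 2), (-450616, 0, 2, 3),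
      (-13409, 0, 3, 2), (-1380, 0, 4, 1), (-20838, 0, 4, 2), (-8533, 0, 5, 1), (34132, 1, 0, 3),
      (-16560, 1, 1, 2), (479136, 1, 1, 3), (-92874, 1, 2, 2), (4830, 1, 3, 1), (424304, 1, 3, 2),
      (-102396, 2, 1, 2), (7245, 2, 2, 1), (-1216976, 2, 2, 2), (68310, 2, 3, 1), (-3450, 2, 4, 0),
      (-177238, 2, 4, 1), (-17066, 2, 5, 0), (-874, 3, 2, 1), (-5520, 3, 3, 0), (785772, 3, 3, 1),
      (-51198, 3, 4, 0), (-3450, 4, 2, 0), (-92989, 4, 2, 1), (-35213, 4, 3, 0), (-236302, 4, 4, 0),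
      (-34408, 5, 2, 0), (-38042, 5, 3, 0), (-19021, 6, 2, 0)]
  | 3 =>
    [(241344, 0, 0, 3), (671744, 0, 0, 4), (865890, 0, 1, 3), (-367187, 0, 2, 2),
      (-1293268, 0, 2, 3), (-1249280, 0, 3, 2), (-70249, 0, 4, 1), (-318956, 0, 4, 2),
      (-34132, 1, 0, 3), (-724032, 1, 1, 2), (-1464880, 1, 1, 3), (-2620872, 1, 2, 2),
      (171524, 1, 3, 1), (925784, 1, 3, 2), (661360, 1, 4, 1), (102396, 2, 1, 2), (296938, 2, 2, 1),
      (-453580, 2, 2, 2), (330920, 2, 3, 1), (-160753, 2, 4, 0), (-901364, 2, 4, 1),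
      (-132272, 2, 5, 0), (-1137888, 3, 2, 1), (-280996, 3, 3, 0), (111864, 3, 3, 1),
      (-132272, 3, 4, 0), (-180579, 4, 2, 0), (-531882, 4, 2, 1), (-202204, 4, 3, 0),
      (-468092, 4, 4, 0), (-355752, 5, 2, 0), (-242340, 5, 3, 0), (-121170, 6, 2, 0)]
  | 4 =>
    [(428832, 0, 0, 3), (556768, 0, 0, 4), (1683902, 0, 1, 3), (-618247, 0, 2, 2),
      (-580568, 0, 2, 3), (-2062790, 0, 3, 2), (-159011, 0, 4, 1), (-652012, 0, 4, 2),
      (34132, 1, 0, 3), (-1286496, 1, 1, 2), (-841120, 1, 1, 3), (-3840308, 1, 2, 2),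
      (168016, 1, 3, 1), (-382704, 1, 3, 2), (769300, 1, 4, 1), (-102396, 2, 1, 2),
      (459236, 2, 2, 1), (-1199640, 2, 2, 2), (-978880, 2, 3, 1), (-319823, 2, 4, 0),
      (-1372988, 2, 4, 1), (-153860, 2, 5, 0), (-2048788, 3, 2, 1), (-636044, 3, 3, 0),
      (-1050216, 3, 3, 1), (-153860, 3, 4, 0), (-423429, 4, 2, 0), (-1239418, 4, 2, 1),
      (-1204718, 4, 3, 0), (-719484, 4, 4, 0), (-1208592, 5, 2, 0), (-660052, 5, 3, 0),
      (-330026, 6, 2, 0)]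
  | 5 =>
    [(-71040, 0, 0, 3), (301216, 0, 0, 4), (930138, 0, 1, 3), (226741, 0, 2, 2), (-99406, 0, 2, 3),
      (-1046688, 0, 3, 2), (-97981, 0, 4, 1), (-574630, 0, 4, 2), (-8372, 0, 5, 1), (-644, 1, 0, 3),
      (213120, 1, 1, 2), (-292296, 1, 1, 3), (-1562312, 1, 2, 2), (-525124, 1, 3, 1),
      (-825756, 1, 3, 2), (1932, 2, 1, 2), (-324722, 2, 2, 1), (-994450, 2, 2, 2),
      (-2091912, 2, 3, 1), (-71341, 2, 4, 0), (-1157290, 2, 4, 1), (-16744, 2, 5, 0),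
      (-1911624, 3, 2, 1), (-391924, 3, 3, 0), (-1444340, 3, 3, 1), (-50232, 3, 4, 0),
      (-302823, 4, 2, 0), (-1135593, 4, 2, 1), (-1377820, 4, 3, 0), (-622542, 4, 4, 0),
      (-1344816, 5, 2, 0), (-817994, 5, 3, 0), (-408997, 6, 2, 0)]
  | 6 =>
    [(-171312, 0, 0, 3), (49936, 0, 0, 4), (26280, 0, 1, 3), (249754, 0, 2, 2), (128800, 0, 2, 3),
      (-12473, 0, 3, 2), (60749, 0, 4, 1), (-311598, 0, 4, 2), (-47027, 0, 5, 1), (188752, 1, 0, 3),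
      (513936, 1, 1, 2), (134080, 1, 1, 3), (70894, 1, 2, 2), (-78214, 1, 3, 1), (-671072, 1, 3, 2),
      (-349780, 1, 4, 1), (-566256, 2, 1, 2), (-189005, 2, 2, 1), (-635368, 2, 2, 2),
      (-1062246, 2, 3, 1), (124991, 2, 4, 0), (-605710, 2, 4, 1), (-24098, 2, 5, 0),
      (-319314, 3, 2, 1), (242996, 3, 3, 0), (-958724, 3, 3, 1), (-212206, 3, 4, 0),
      (160833, 4, 2, 0), (-645609, 4, 2, 1), (-899165, 4, 3, 0), (-346358, 4, 4, 0),
      (-704936, 5, 2, 0), (-548882, 5, 3, 0), (-274441, 6, 2, 0)]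
  | 7 =>
    [(-20928, 0, 0, 3), (1408, 0, 0, 4), (-960, 0, 1, 3), (37060, 0, 2, 2), (56224, 0, 2, 3),
      (42240, 0, 3, 2), (872, 0, 4, 1), (-102240, 0, 4, 2), (-47188, 0, 5, 1), (62784, 1, 1, 2),
      (69504, 1, 1, 3), (61792, 1, 2, 2), (-35752, 1, 3, 1), (-246976, 1, 3, 2), (-261040, 1, 4, 1),
      (-36188, 2, 2, 1), (-186720, 2, 2, 2), (-403344, 2, 3, 1), (8720, 2, 4, 0),
      (-206160, 2, 4, 1), (-42168, 2, 5, 0), (-186728, 3, 2, 1), (3488, 3, 3, 0),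
      (-393248, 3, 3, 1), (-230920, 3, 4, 0), (-218312, 4, 2, 1), (-385104, 4, 3, 0),
      (-121824, 4, 4, 0), (-207400, 5, 2, 0), (-235792, 5, 3, 0), (-117896, 6, 2, 0)]
  | 8 =>
    [(1024, 0, 0, 3), (-3840, 0, 0, 4), (-8704, 0, 1, 3), (-6832, 0, 2, 2), (15104, 0, 2, 3),
      (8976, 0, 3, 2), (4976, 0, 4, 1), (-20576, 0, 4, 2), (256, 0, 5, 1), (-1024, 1, 0, 3),
      (-3072, 1, 1, 2), (22528, 1, 1, 3), (30624, 1, 2, 2), (21824, 1, 3, 1), (-56320, 1, 3, 2),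
      (-16640, 1, 4, 1), (3072, 2, 1, 2), (11808, 2, 2, 1), (-36736, 2, 2, 2), (-56928, 2, 3, 1),
      (4592, 2, 4, 0), (-42720, 2, 4, 1), (3840, 2, 5, 0), (-34880, 3, 2, 1), (19904, 3, 3, 0),
      (-93760, 3, 3, 1), (4864, 3, 4, 0), (15056, 4, 2, 0), (-45584, 4, 2, 1), (-20080, 4, 3, 0),
      (-26336, 4, 4, 0), (-25568, 5, 2, 0), (-58400, 5, 3, 0), (-29200, 6, 2, 0)]
  | 9 =>
    [(-2048, 0, 3, 2), (-1792, 0, 4, 2), (256, 0, 5, 1), (-5120, 1, 2, 2), (-4096, 1, 3, 2),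
      (2560, 1, 4, 1), (3584, 2, 3, 1), (-4608, 2, 4, 1), (-3072, 3, 2, 1), (-12288, 3, 3, 1),
      (1024, 3, 4, 0), (-4096, 4, 2, 1), (2560, 4, 3, 0), (-2816, 4, 4, 0), (-8192, 5, 3, 0),
      (-4096, 6, 2, 0)]
  | _ => []

/-- The certificate `(y + z) ^ 2 * (z - y) * s_k` is `halfCert k x y z - halfCert k x z y`, where
`halfCert` has natural number coefficients. -/
def halfCert (k : ℕ) (x y z : A) : A :=
  (y + z) ^ 2 * ((certTerms k).map fun (c, i, j, l) =>
    (c.toNat * z + (-c).toNat * y) * (x ^ i * (y + z) ^ j * (x * y + x * z + y * z) ^ l)).sum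

/-- The Euler class `∏_{i<j} (x_i + x_j) ^ 4` of `(Λ²S*)^{⊕4}`. -/
def euler (x : Fin 3 → A) : A := (∏ i, (x i + x (i + 1))) ^ 4

/-- The contribution of the first variable to the right-hand side of the certificate identity. -/
def halfTelescoper (k : ℕ) (x y z : A) : A :=
  x ^ 8 * halfCert (k + 1) x y z + ((x + y) * (x + z)) ^ 4 * halfCert k (x + 1) y z

/-- One side of the certificate identity after moving all negative terms to the other side: the
identity says that `certSide k a b c` is symmetric in `b` and `c`. -/
def certSide (k : ℕ) (a b c : A) : A :=
  picardFuchs k (a + b + c) * euler ![a, b, c] * (a ^ 2 * b + b ^ 2 * c + c ^ 2 * a) +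
    (halfTelescoper k a c b + halfTelescoper k b a c + halfTelescoper k c b a)

lemma picardFuchs_eq_zero {k : ℕ} (hk : 10 ≤ k) (θ : A) : picardFuchs k θ = 0 := by
  obtain ⟨k, rfl⟩ := Nat.exists_eq_add_of_le' hk
  simp [picardFuchs]

lemma map_picardFuchs (f : A →+* A') (k : ℕ) (θ : A) :
    f (picardFuchs k θ) = picardFuchs k (f θ) := by
  unfold picardFuchs
  split <;> simp [map_ofNat f]

lemma map_halfCert (f : A →+* A') (k : ℕ) (x y z : A) :
    f (halfCert k x y z) = halfCert k (f x) (f y) (f z) := by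
  simp [halfCert, map_list_sum, Function.comp_def]

lemma map_certSide (f : A →+* A') (k : ℕ) (a b c : A) :
    f (certSide k a b c) = certSide k (f a) (f b) (f c) := by
  simp [certSide, euler, Fin.prod_univ_three, halfTelescoper, map_halfCert, map_picardFuchs]

lemma certSide_swap (k : ℕ) (a b c : A) : certSide k a b c = certSide k a c b := by
  by_cases hk : k < 10
  · let B : Fin 3 → ℕ := ![2 ^ 32000, 2 ^ 1500, 2 ^ 64]
    let v (i j : Fin 3) : ℕ := if i < j then B j else 1
    -- Expanding the identity is too costly; at a Kronecker point it becomes an equality of numbers.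
    have key : ∀ k < 10,
        (∀ i, certSide k (v i 0) (v i 1) (v i 2) < B i) ∧
        (∀ i, certSide k (v i 0) (v i 2) (v i 1) < B i) ∧
        certSide k (B 0) (B 1) (B 2) = certSide k (B 0) (B 2) (B 1) := by
      decide +kernel
    obtain ⟨h, h', heq⟩ := key k hk
    have hX : certSide k (.X 0) (.X 1) (.X 2) =
        (certSide k (.X 0) (.X 2) (.X 1) : MvPolynomial (Fin 3) ℕ) := by
      apply mvPolynomial_eq_of_eval_eq_of_eval_lt (B := B) <;>
        simpa only [map_certSide, MvPolynomial.eval_X]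
    simpa [map_certSide] using congrArg (MvPolynomial.eval₂Hom (Nat.castRingHom A) ![a, b, c]) hX
  · obtain ⟨k, rfl⟩ := Nat.exists_eq_add_of_le' (not_lt.mp hk)
    simp [certSide, halfTelescoper, picardFuchs, halfCert, certTerms]

end Certificate

section AlternatingCertificate

variable {A : Type*} [CommRing A]

/-- The Vandermonde product `∏_{i<j} (x_i - x_j)`. -/
def vandermonde (x : Fin 3 → A) : A := ∏ p ∈ pairs, (x p.1 - x p.2)

/-- The telescoping certificate, alternating in its last two arguments. -/
def cert (k : ℕ) (x y z : A) : A := halfCert k x y z - halfCert k x z y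

lemma cert_zero (x y z : A) : cert 0 x y z = 0 := by
  simp [cert, halfCert, certTerms]

lemma vandermonde_eq_mul (x : Fin 3 → A) :
    vandermonde x = (x 0 - x 1) * (x 0 - x 2) * (x 1 - x 2) := by
  rw [vandermonde, show pairs = {(0, 1), (0, 2), (1, 2)} by decide]
  simp [mul_assoc]

lemma picardFuchs_mul_euler_mul_vandermonde (k : ℕ) (x : Fin 3 → A) :
    picardFuchs k (∑ j, x j) * euler x * vandermonde x =
      ∑ i, x i ^ 8 * cert (k + 1) (x i) (x (i + 1)) (x (i + 2)) +
        ∑ i, ((x i + x (i + 1)) * (x i + x (i + 2))) ^ 4 *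
          cert k (x i + 1) (x (i + 1)) (x (i + 2)) := by
  have h := certSide_swap k (x 0) (x 1) (x 2)
  simp only [certSide, halfTelescoper, add_right_comm (x 0) (x 2)] at h
  simp only [vandermonde_eq_mul, euler, cert, Fin.sum_univ_three, Fin.prod_univ_three] at h ⊢
  simp only [Fin.isValue, Matrix.cons_val_zero, zero_add, Matrix.cons_val_one, Fin.reduceAdd,
    Matrix.cons_val] at h ⊢
  linear_combination h

lemma euler_mul_vandermonde_of_pow_eq_zero {x : Fin 3 → A} (h₀ : x 0 ^ 8 = 0) (h₁ : x 1 ^ 6 = 0)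
    (h₂ : x 2 ^ 4 = 0) : euler x * vandermonde x = 32 * (x 0 ^ 7 * x 1 ^ 5 * x 2 ^ 3) := by
  simp only [euler, vandermonde_eq_mul, Fin.prod_univ_three, zero_add, Fin.reduceAdd, Fin.isValue]
  generalize x 0 = a at *
  generalize x 1 = b at *
  generalize x 2 = c at *
  grind

end AlternatingCertificate

section Hypergeometric

open MvPowerSeries

variable {A : Type*} [CommRing A]

/-- The shifted variables `x_j + d_j`. -/
def shift (x : Fin 3 → A) (d : Fin 3 → ℕ) (j : Fin 3) : A := x j + d j

/-- The factor `u_d = ∏_j ∏_{m=1}^{d_j} (x_j + m) ^ 8` of the denominator. -/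
def den (x : Fin 3 → A) (d : Fin 3 → ℕ) : A := ∏ j, ∏ m ∈ Finset.Icc 1 (d j), (x j + m) ^ 8

/-- The factor of `T d` contributed by the bundle `(Λ²S*)^{⊕4}`. -/
def twist (x : Fin 3 → A) (d : Fin 3 → ℕ) : A :=
  (∏ i, ∏ m ∈ Finset.Icc 1 (d i + d (i + 1)), (x i + x (i + 1) + m)) ^ 4

/-- The factor of the bundle when the products start at `m = 0` and stop one step earlier. -/
def lowerTwist (x : Fin 3 → A) (d : Fin 3 → ℕ) : A :=
  (∏ i, ∏ m ∈ Finset.range (d i + d (i + 1)), (x i + x (i + 1) + m)) ^ 4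

lemma shift_add_single_self (x : Fin 3 → A) (d : Fin 3 → ℕ) (i : Fin 3) :
    shift x (d + Pi.single i 1) i = shift x d i + 1 := by
  simp [shift, add_assoc]

lemma shift_add_single_of_ne (x : Fin 3 → A) (d : Fin 3 → ℕ) {i j : Fin 3} (h : j ≠ i) :
    shift x (d + Pi.single i 1) j = shift x d j := by
  simp [shift, h]

lemma euler_mul_twist (x : Fin 3 → A) (d : Fin 3 → ℕ) :
    euler x * twist x d = lowerTwist x d * euler (shift x d) := by
  have hprod (a : A) (N : ℕ) : a * ∏ m ∈ Finset.Icc 1 N, (a + m) =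
      (∏ m ∈ Finset.range N, (a + m)) * (a + N) := by
    rw [← Finset.prod_range_succ, Finset.range_eq_Ico, Finset.prod_eq_prod_Ico_succ_bot (by lia)]
    simp [Finset.Ico_add_one_right_eq_Icc]
  simp only [euler, twist, lowerTwist, ← mul_pow, ← Finset.prod_mul_distrib, hprod, shift,
    Nat.cast_add, add_add_add_comm]

lemma lowerTwist_add_single (x : Fin 3 → A) (d : Fin 3 → ℕ) (i : Fin 3) :
    lowerTwist x (d + Pi.single i 1) =
      ((shift x d i + shift x d (i + 1)) * (shift x d i + shift x d (i + 2))) ^ 4 *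
        lowerTwist x d := by
  have hrot (f : Fin 3 → A) : ∏ k, f k = f i * f (i + 1) * f (i + 2) := by
    simpa [Fin.prod_univ_three] using (Equiv.prod_comp (Equiv.addLeft i) f).symm
  have hsucc : i + 1 + 1 = i + 2 ∧ i + 2 + 1 = i := by
    clear hrot
    decide +revert
  have hsingle : (Pi.single i 1 : Fin 3 → ℕ) (i + 1) = 0 ∧
      (Pi.single i 1 : Fin 3 → ℕ) (i + 2) = 0 := by simp
  simp only [lowerTwist, hrot, hsucc, Pi.add_apply, Pi.single_eq_same, hsingle, add_zero,
    add_right_comm (d i) 1, ← add_assoc, Finset.prod_range_succ, shift, Nat.cast_add]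
  ring

lemma den_add_single (x : Fin 3 → A) (d : Fin 3 → ℕ) (i : Fin 3) :
    den x (d + Pi.single i 1) = (shift x d i + 1) ^ 8 * den x d := by
  have hrest : ∏ j ∈ Finset.univ.erase i,
      ∏ m ∈ Finset.Icc 1 ((d + Pi.single i 1 : Fin 3 → ℕ) j), (x j + m) ^ 8 =
        ∏ j ∈ Finset.univ.erase i, ∏ m ∈ Finset.Icc 1 (d j), (x j + m) ^ 8 :=
    Finset.prod_congr rfl fun j hj => by
      rw [Pi.add_apply, Pi.single_eq_of_ne (Finset.ne_of_mem_erase hj), add_zero]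
  rw [den, den, ← Finset.mul_prod_erase _ _ (Finset.mem_univ i), hrest,
    ← Finset.mul_prod_erase Finset.univ _ (Finset.mem_univ i), Pi.add_apply, Pi.single_eq_same,
    Finset.prod_Icc_succ_top (Nat.le_add_left 1 _), shift, Nat.cast_succ]
  ring

lemma T_eq_mul_inv (d : Fin 3 → ℕ) : T d = vandermonde (shift X d) * twist X d * (den X d)⁻¹ := by
  have hC (m : ℕ) : Cc m = m := map_natCast MvPowerSeries.C m
  simp only [T, den, n, hC]
  congr 2
  · simp [vandermonde, shift, Cc, add_sub_add_comm]
  · simp only [ws, List.map_cons, List.map_nil, List.prod_cons, List.prod_nil, Fin.sum_univ_three,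
      Fin.prod_univ_three, Matrix.cons_val_zero, Matrix.cons_val_one, Matrix.cons_val, Nat.cast_one,
      Nat.cast_zero, one_mul, zero_mul, add_zero, zero_add, mul_one, twist, Fin.isValue,
      Fin.reduceAdd, add_comm (d 2), add_comm (X 2 : R)]
    ring

/-- The hypergeometric part of `T d`, with the Euler class cleared from the denominator. -/
def hypergeom (d : Fin 3 → ℕ) : R := lowerTwist X d * (den X d)⁻¹

lemma constantCoeff_den (d : Fin 3 → ℕ) : constantCoeff (den X d : R) ≠ 0 := by
  simp [den, Finset.prod_eq_zero_iff]

lemma euler_mul_T (d : Fin 3 → ℕ) :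
    euler X * T d = euler (shift X d) * vandermonde (shift X d) * hypergeom d := by
  rw [T_eq_mul_inv, hypergeom]
  linear_combination vandermonde (shift X d) * (den X d)⁻¹ * euler_mul_twist (X : Fin 3 → R) d

lemma hypergeom_add_single (d : Fin 3 → ℕ) (i : Fin 3) :
    (shift X d i + 1) ^ 8 * hypergeom (d + Pi.single i 1) =
      ((shift X d i + shift X d (i + 1)) * (shift X d i + shift X d (i + 2))) ^ 4 *
        hypergeom d := by
  have hden : (shift X d i + 1) ^ 8 * (den X (d + Pi.single i 1) : R)⁻¹ = (den X d)⁻¹ := by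
    rw [MvPowerSeries.eq_inv_iff_mul_eq_one (constantCoeff_den d), mul_right_comm, ← den_add_single,
      MvPowerSeries.mul_inv_cancel _ (constantCoeff_den _)]
  rw [hypergeom, hypergeom, lowerTwist_add_single, ← hden]
  ring

end Hypergeometric

section Summation

open MvPowerSeries

lemma sum_piAntidiag_add_single {ι M : Type*} [Fintype ι] [DecidableEq ι] [AddCommMonoid M]
    (f : (ι → ℕ) → M) (i : ι) (δ : ℕ) :
    ∑ d ∈ Finset.piAntidiag Finset.univ δ, f (d + Pi.single i 1) =
      ∑ d ∈ Finset.piAntidiag Finset.univ (δ + 1) with d i ≠ 0, f d := by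
  have hsub {d : ι → ℕ} (hd : d i ≠ 0) : d - Pi.single i 1 + Pi.single i 1 = d :=
    tsub_add_cancel_of_le (update_le_iff.mpr
      ⟨Nat.one_le_iff_ne_zero.mpr hd, fun _ _ => Nat.zero_le _⟩)
  refine Finset.sum_nbij' (· + Pi.single i 1) (· - Pi.single i 1) (fun d hd => ?_)
    (fun d hd => ?_) (by simp) (fun d hd => hsub (Finset.mem_filter.mp hd).2) (by simp)
  · simp_all [Finset.mem_piAntidiag, Finset.sum_add_distrib]
  · obtain ⟨hd, hi⟩ := Finset.mem_filter.mp hd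
    rw [← hsub hi] at hd
    simpa [Finset.mem_piAntidiag, Finset.sum_add_distrib] using hd

lemma F_eq_sum_piAntidiag (δ : ℕ) : F δ = ∑ d ∈ Finset.piAntidiag Finset.univ δ, T d := by
  refine Finset.sum_congr (Finset.ext fun d => ?_) fun _ _ => rfl
  simp only [Finset.mem_filter, Fintype.mem_piFinset, Finset.mem_range, Finset.mem_piAntidiag,
    Finset.mem_univ, implies_true, and_true, and_iff_right_iff_imp]
  rintro rfl j
  exact Nat.lt_succ_of_le (Finset.single_le_sum (fun _ _ => Nat.zero_le _) (Finset.mem_univ j))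

/-- The telescoping summand in direction `i`. -/
def certSummand (k : ℕ) (i : Fin 3) (d : Fin 3 → ℕ) : R :=
  shift X d i ^ 8 * cert k (shift X d i) (shift X d (i + 1)) (shift X d (i + 2)) * hypergeom d

lemma certSummand_mem_powIdeal {k : ℕ} {i : Fin 3} {d : Fin 3 → ℕ} (h : d i = 0) :
    certSummand k i d ∈ powIdeal fun _ => 8 := by
  rw [certSummand, show shift X d i = (X i : R) by simp [shift, h], mul_assoc]
  exact Ideal.mul_mem_right _ _ (X_pow_mem_powIdeal _ i)

lemma certSummand_add_single (k : ℕ) (i : Fin 3) (d : Fin 3 → ℕ) :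
    certSummand k i (d + Pi.single i 1) =
      ((shift X d i + shift X d (i + 1)) * (shift X d i + shift X d (i + 2))) ^ 4 *
        cert k (shift X d i + 1) (shift X d (i + 1)) (shift X d (i + 2)) * hypergeom d := by
  rw [certSummand, shift_add_single_self, shift_add_single_of_ne _ _ (by simp),
    shift_add_single_of_ne _ _ (by simp), mul_right_comm, hypergeom_add_single]
  ring

/-- The sum of all telescoping summands of degree `δ`. -/
def certSum (k δ : ℕ) : R := ∑ d ∈ Finset.piAntidiag Finset.univ δ, ∑ i, certSummand k i d

lemma certSum_zero_left (δ : ℕ) : certSum 0 δ = 0 := by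
  simp [certSum, certSummand, cert_zero]

lemma certSum_zero_right_mem (k : ℕ) : certSum k 0 ∈ powIdeal fun _ => 8 := by
  simpa [certSum] using sum_mem fun i _ => certSummand_mem_powIdeal (i := i) (d := 0) (k := k) rfl

lemma certSum_succ_sub_sum_mem (k δ : ℕ) :
    certSum k (δ + 1) -
        ∑ d ∈ Finset.piAntidiag Finset.univ δ, ∑ i, certSummand k i (d + Pi.single i 1) ∈
      powIdeal fun _ => 8 := by
  rw [certSum, Finset.sum_comm, Finset.sum_comm (t := Finset.univ), ← Finset.sum_sub_distrib]
  refine sum_mem fun i _ => ?_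
  rw [sum_piAntidiag_add_single, ← Finset.sum_filter_add_sum_filter_not _ (fun d => d i ≠ 0),
    add_sub_cancel_left]
  exact sum_mem fun d hd => certSummand_mem_powIdeal (by simpa using (Finset.mem_filter.mp hd).2)

/-- The `k`-th coefficient of the Picard–Fuchs operator applied to the term of degree `δ`, times the
Euler class. -/
def recTerm (k δ : ℕ) : R := picardFuchs k ((∑ j, X j) + (δ : R)) * euler X * F δ

lemma recTerm_eq (k δ : ℕ) :
    recTerm k δ = certSum (k + 1) δ +
      ∑ d ∈ Finset.piAntidiag Finset.univ δ, ∑ i, certSummand k i (d + Pi.single i 1) := by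
  rw [recTerm, F_eq_sum_piAntidiag, Finset.mul_sum, certSum, ← Finset.sum_add_distrib]
  refine Finset.sum_congr rfl fun d hd => ?_
  have hδ : (∑ j, X j) + (δ : R) = ∑ j, shift X d j := by
    simp [shift, Finset.sum_add_distrib, ← (Finset.mem_piAntidiag.mp hd).1]
  rw [mul_assoc, euler_mul_T, hδ, ← mul_assoc, ← mul_assoc, picardFuchs_mul_euler_mul_vandermonde]
  simp only [certSummand_add_single]
  simp only [certSummand, ← Finset.sum_mul, ← add_mul]

lemma recTerm_sub_mem (k δ : ℕ) :
    recTerm k δ - (certSum (k + 1) δ + certSum k (δ + 1)) ∈ powIdeal fun _ => 8 := by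
  rw [recTerm_eq, add_sub_add_left_eq_sub, ← neg_sub]
  exact neg_mem (certSum_succ_sub_sum_mem k δ)

lemma sum_recTerm_mem (N : ℕ) :
    ∑ k ∈ Finset.range (N + 1), (-1) ^ k * recTerm k (N - k) ∈ powIdeal fun _ => 8 := by
  have htel := Finset.sum_range_sub' (fun k => (-1) ^ k * certSum k (N + 1 - k)) (N + 1)
  have hmem : ∑ k ∈ Finset.range (N + 1),
      (-1) ^ k * (recTerm k (N - k) - (certSum (k + 1) (N - k) + certSum k (N - k + 1))) ∈
        powIdeal fun _ => 8 :=
    sum_mem fun k _ => Ideal.mul_mem_left _ _ (recTerm_sub_mem k (N - k))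
  rw [certSum_zero_left, mul_zero, zero_sub, Nat.sub_self] at htel
  convert add_mem hmem
    (neg_mem (Ideal.mul_mem_left _ ((-1) ^ (N + 1)) (certSum_zero_right_mem (N + 1))))
  rw [← htel, ← Finset.sum_add_distrib]
  refine Finset.sum_congr rfl fun k hk => ?_
  rw [Nat.add_sub_add_right, Nat.succ_sub (Finset.mem_range_succ_iff.mp hk)]
  ring

end Summation

section Recurrence

open MvPowerSeries

lemma euler_mul_vandermonde_sub_mem_powIdeal :
    euler X * vandermonde X - 32 * (X 0 ^ 7 * X 1 ^ 5 * X 2 ^ 3) ∈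
      (powIdeal ![8, 6, 4] : Ideal R) := by
  have hpow (j : Fin 3) :
      Ideal.Quotient.mk (powIdeal ![8, 6, 4] : Ideal R) (X j) ^ ![8, 6, 4] j = 0 := by
    rw [← map_pow, Ideal.Quotient.eq_zero_iff_mem]
    exact X_pow_mem_powIdeal _ j
  rw [← Ideal.Quotient.eq]
  simpa [euler, vandermonde, map_ofNat (Ideal.Quotient.mk _)] using
    euler_mul_vandermonde_of_pow_eq_zero (hpow 0) (hpow 1) (hpow 2)

lemma constantCoeff_eq_zero_of_euler_mul_mem {H : R}
    (hH : euler X * vandermonde X * H ∈ powIdeal fun _ => 8) : constantCoeff H = 0 := by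
  let m : Fin 3 →₀ ℕ := Finsupp.equivFunOnFinite.symm ![7, 5, 3]
  have hle : ![8, 6, 4] ≤ fun _ : Fin 3 => 8 := by simp [Pi.le_def, Fin.forall_fin_succ]
  have hm : monomial m 32 * H ∈ powIdeal ![8, 6, 4] := by
    have hlead : (monomial m 32 : R) = 32 * (X 0 ^ 7 * X 1 ^ 5 * X 2 ^ 3) := by
      simp [monomial_eq', m, Finsupp.prod_fintype, Fin.prod_univ_three, map_ofNat C]
    rw [hlead]
    have := sub_mem (powIdeal_anti hle hH)
      (Ideal.mul_mem_right H _ euler_mul_vandermonde_sub_mem_powIdeal)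
    rwa [← sub_mul, sub_sub_cancel] at this
  have hcoeff := coeff_eq_zero_of_mem_powIdeal hm (m := m) (by decide)
  have := coeff_add_monomial_mul m 0 H (32 : ℚ)
  rw [add_zero, hcoeff] at this
  simpa using this

lemma sum_picardFuchs_mul_constantCoeff {G : ℕ → R} (hG : ∀ δ, F δ = Vand * G δ) (N : ℕ) :
    ∑ k ∈ Finset.range (N + 1),
      (-1) ^ k * picardFuchs k ((N - k : ℕ) : ℚ) * constantCoeff (G (N - k)) = 0 := by
  have h : constantCoeff (∑ k ∈ Finset.range (N + 1),
      (-1) ^ k * picardFuchs k ((∑ j, X j) + ((N - k : ℕ) : R)) * G (N - k)) = 0 := by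
    apply constantCoeff_eq_zero_of_euler_mul_mem
    convert sum_recTerm_mem N using 1
    rw [Finset.mul_sum]
    refine Finset.sum_congr rfl fun k _ => ?_
    rw [recTerm, hG, Vand, vandermonde]
    ring
  simpa [map_picardFuchs] using h

end Recurrence

section Divisibility

variable {A B : Type*} [CommRing A] [CommRing B]

/-- The summand `T_d` multiplied by the common denominator `den x (fun _ => δ)`. -/
def clearedTerm (x : Fin 3 → A) (δ : ℕ) (d : Fin 3 → ℕ) : A :=
  vandermonde (shift x d) * twist x d * ∏ j, ∏ m ∈ Finset.Ioc (d j) δ, (x j + m) ^ 8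

lemma map_vandermonde (φ : A →+* B) (x : Fin 3 → A) :
    φ (vandermonde x) = vandermonde (φ ∘ x) := by
  simp [vandermonde]

lemma map_clearedTerm (φ : A →+* B) (x : Fin 3 → A) (δ : ℕ) (d : Fin 3 → ℕ) :
    φ (clearedTerm x δ d) = clearedTerm (φ ∘ x) δ d := by
  simp [clearedTerm, vandermonde, shift, twist]

lemma vandermonde_eq_neg_det (x : Fin 3 → A) :
    vandermonde x = -(Matrix.vandermonde x).det := by
  rw [vandermonde_eq_mul, Matrix.det_fin_three]
  simp only [Matrix.vandermonde_apply, Fin.val_zero, Fin.val_one, Fin.val_two]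
  ring

lemma vandermonde_eq_zero {x : Fin 3 → A} {i j : Fin 3} (hij : i ≠ j) (hx : x i = x j) :
    vandermonde x = 0 := by
  rw [vandermonde_eq_neg_det, neg_eq_zero]
  exact Matrix.det_zero_of_row_eq hij (by ext k; simp only [Matrix.vandermonde_apply, hx])

lemma vandermonde_comp_swap (x : Fin 3 → A) {i j : Fin 3} (hij : i ≠ j) :
    vandermonde (x ∘ Equiv.swap i j) = -vandermonde x := by
  have h := Matrix.det_permute (Equiv.swap i j) (Matrix.vandermonde x)
  rw [Equiv.Perm.sign_swap hij, Units.val_neg, Units.val_one, Int.cast_neg, Int.cast_one,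
    neg_one_mul] at h
  rw [vandermonde_eq_neg_det, vandermonde_eq_neg_det, ← h]
  rfl

lemma prod_comp_swap_of_symm {M : Type*} [CommMonoid M] {g : Fin 3 → Fin 3 → M}
    (hg : ∀ a b, g a b = g b a) (i j : Fin 3) :
    ∏ k, g (Equiv.swap i j k) (Equiv.swap i j (k + 1)) = ∏ k, g k (k + 1) := by
  fin_cases i <;> fin_cases j <;>
    simp [Fin.prod_univ_three, Equiv.swap_apply_def, hg 1 0, hg 2 1, hg 2 0, mul_comm,
      mul_left_comm]

lemma twist_comp_swap (x : Fin 3 → A) (d : Fin 3 → ℕ) (i j : Fin 3) :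
    twist (x ∘ Equiv.swap i j) (d ∘ Equiv.swap i j) = twist x d :=
  congrArg (· ^ 4) <| prod_comp_swap_of_symm
    (g := fun a b => ∏ m ∈ Finset.Icc 1 (d a + d b), (x a + x b + (m : A)))
    (fun a b => by simp only [add_comm]) i j

lemma clearedTerm_comp_swap (x : Fin 3 → A) (δ : ℕ) (d : Fin 3 → ℕ) {i j : Fin 3} (hij : i ≠ j) :
    clearedTerm (x ∘ Equiv.swap i j) δ (d ∘ Equiv.swap i j) = -clearedTerm x δ d := by
  have hshift : shift (x ∘ Equiv.swap i j) (d ∘ Equiv.swap i j) = shift x d ∘ Equiv.swap i j := rfl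
  have hprod := Equiv.prod_comp (Equiv.swap i j) fun k =>
    ∏ m ∈ Finset.Ioc (d k) δ, (x k + (m : A)) ^ 8
  rw [clearedTerm, hshift, vandermonde_comp_swap _ hij, twist_comp_swap, clearedTerm, ← hprod]
  simp only [Function.comp_apply, neg_mul]

lemma sum_clearedTerm_eq_zero {x : Fin 3 → A} (δ : ℕ) {i j : Fin 3} (hij : i ≠ j)
    (hx : x i = x j) : ∑ d ∈ Finset.piAntidiag Finset.univ δ, clearedTerm x δ d = 0 := by
  have hxs : x ∘ Equiv.swap i j = x := by
    rw [Equiv.comp_swap_eq_update, hx, Function.update_eq_self, ← hx, Function.update_eq_self]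
  refine Finset.sum_involution (fun d _ => d ∘ Equiv.swap i j) (fun d _ => ?_)
    (fun d _ hd hfix => hd ?_) (fun d hd => ?_) fun d _ => ?_
  · nth_rw 2 [← hxs]
    rw [clearedTerm_comp_swap _ _ _ hij, add_neg_cancel]
  · have hd' : d i = d j := by simpa using congrFun hfix j
    rw [clearedTerm, vandermonde_eq_zero hij (by rw [shift, shift, hx, hd']), zero_mul, zero_mul]
  · simpa [Finset.mem_piAntidiag, Equiv.sum_comp (Equiv.swap i j) d] using hd
  · simp [Function.comp_assoc, ← Equiv.coe_trans]

lemma den_mul_prod_Ioc (x : Fin 3 → A) {d : Fin 3 → ℕ} {δ : ℕ} (hd : ∀ j, d j ≤ δ) :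
    den x d * ∏ j, ∏ m ∈ Finset.Ioc (d j) δ, (x j + m) ^ 8 = den x fun _ => δ := by
  simp only [den, ← Finset.prod_mul_distrib]
  refine Finset.prod_congr rfl fun j _ => ?_
  exact Finset.prod_Ioc_consecutive _ (Nat.zero_le _) (hd j)

open MvPowerSeries in
lemma den_mul_T {d : Fin 3 → ℕ} {δ : ℕ} (hd : ∀ j, d j ≤ δ) :
    (den X fun _ => δ) * T d = clearedTerm X δ d := by
  rw [T_eq_mul_inv, clearedTerm, ← den_mul_prod_Ioc _ hd]
  linear_combination vandermonde (shift X d) * twist X d *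
    (∏ j, ∏ m ∈ Finset.Ioc (d j) δ, (X j + (m : R)) ^ 8) *
      MvPowerSeries.mul_inv_cancel _ (constantCoeff_den d)

lemma vandermonde_dvd_sum_clearedTerm (δ : ℕ) :
    vandermonde MvPolynomial.X ∣ ∑ d ∈ Finset.piAntidiag Finset.univ δ,
      clearedTerm (MvPolynomial.X : Fin 3 → MvPolynomial (Fin 3) ℚ) δ d := by
  refine prod_X_sub_X_dvd (fun p hp => (Finset.mem_filter.mp hp).2) fun p hp => ?_
  have hne : p.1 ≠ p.2 := (Finset.mem_filter.mp hp).2.ne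
  rw [map_sum]
  simp only [← AlgHom.coe_toRingHom, map_clearedTerm]
  exact sum_clearedTerm_eq_zero δ hne (by simp [Function.update_of_ne hne.symm])

lemma Vand_dvd_F (δ : ℕ) : Vand ∣ F δ := by
  have hden : (den MvPowerSeries.X fun _ => δ) * F δ =
      ∑ d ∈ Finset.piAntidiag Finset.univ δ, clearedTerm MvPowerSeries.X δ d := by
    rw [F_eq_sum_piAntidiag, Finset.mul_sum]
    refine Finset.sum_congr rfl fun d hd => den_mul_T fun j => ?_
    rw [← (Finset.mem_piAntidiag.mp hd).1]
    exact Finset.single_le_sum (fun _ _ => Nat.zero_le _) (Finset.mem_univ j)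
  have hunit : IsUnit (den MvPowerSeries.X fun _ => δ : R) :=
    MvPowerSeries.isUnit_iff_constantCoeff.mpr (constantCoeff_den _).isUnit
  let φ : MvPolynomial (Fin 3) ℚ →+* R := MvPolynomial.coeToMvPowerSeries.ringHom
  have hX : φ ∘ MvPolynomial.X = MvPowerSeries.X := funext MvPolynomial.coe_X
  have hdvd := map_dvd φ (vandermonde_dvd_sum_clearedTerm δ)
  simp only [map_sum, map_clearedTerm, map_vandermonde, hX] at hdvd
  rwa [← hden, hunit.dvd_mul_left] at hdvd

end Divisibility

section DifferentialEquation

lemma coeff_th (f : PowerSeries ℚ) (d : ℕ) :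
    PowerSeries.coeff d (th f) = d * PowerSeries.coeff d f := by
  simp [th]

lemma sum_range_ten_picardFuchs_mul_constantCoeff {G : ℕ → R} (hG : ∀ δ, F δ = Vand * G δ) (N : ℕ) :
    ∑ k ∈ Finset.range 10, (if k ≤ N then 1 else 0) *
      ((-1) ^ k * picardFuchs k ((N - k : ℕ) : ℚ) * MvPowerSeries.constantCoeff (G (N - k))) =
        0 := by
  refine Eq.trans ?_ (sum_picardFuchs_mul_constantCoeff hG N)
  simp only [boole_mul]
  rw [← Finset.sum_filter]
  refine Finset.sum_subset_zero_on_sdiff (fun k hk => ?_) (fun k hk => ?_) fun k _ => rfl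
  · simp only [Finset.mem_filter, Finset.mem_range] at hk ⊢
    lia
  · simp only [Finset.mem_sdiff, Finset.mem_filter, Finset.mem_range] at hk
    rw [picardFuchs_eq_zero (by lia), mul_zero, zero_mul]

end DifferentialEquation

/-- every `F_δ` is divisible by the Vandermonde `Δ`, and the series
`I₀ = Σ a_δ q^δ` with `a_δ = (F_δ/Δ)(0)` is annihilated by the stated
Picard–Fuchs operator. -/
theorem stmt_13 :
    (∀ δ : ℕ, ∃ G : R, F δ = Vand * G) ∧
    (∀ G : ℕ → R, (∀ δ : ℕ, F δ = Vand * G δ) →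
      ∀ I₀ : PowerSeries ℚ,
        I₀ = PowerSeries.mk (fun δ => MvPowerSeries.constantCoeff (G δ)) →
        529 * th^[4] I₀ - 23 * PowerSeries.X * (850 * th^[4] I₀ + 1634 * th^[3] I₀ + 1461 * th^[2] I₀ + 644 * th I₀ + 115 * I₀) + PowerSeries.X ^ 2 * (140191 * th^[4] I₀ + 504286 * th^[3] I₀ + 765193 * th^[2] I₀ + 554484 * th I₀ + 160080 * I₀) - 2 * PowerSeries.X ^ 3 * (225598 * th^[4] I₀ + 1145682 * th^[3] I₀ + 2338529 * th^[2] I₀ + 2203584 * th I₀ + 805023 * I₀) + PowerSeries.X ^ 4 * (739023 * th^[4] I₀ + 4533564 * th^[3] I₀ + 11008538 * th^[2] I₀ + 12265136 * th I₀ + 5219792 * I₀) - PowerSeries.X ^ 5 * (683438 * th^[4] I₀ + 4503734 * th^[3] I₀ + 11576207 * th^[2] I₀ + 13658100 * th I₀ + 6109137 * I₀) + PowerSeries.X ^ 6 * (392337 * th^[4] I₀ + 2558982 * th^[3] I₀ + 6275869 * th^[2] I₀ + 6925308 * th I₀ + 2877864 * I₀) - 4 * PowerSeries.X ^ 7 *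 (36774 * th^[4] I₀ + 235086 * th^[3] I₀ + 558499 * th^[2] I₀ + 579748 * th I₀ + 221197 * I₀) + 16 * PowerSeries.X ^ 8 * (2081 * th^[4] I₀ + 12548 * th^[3] I₀ + 28814 * th^[2] I₀ + 29364 * th I₀ + 11133 * I₀) - 256 * PowerSeries.X ^ 9 * ((fun g => 2 * th g + 3 * g) ((fun g => 2 * th g + 3 * g) ((fun g => 2 * th g + 3 * g) ((fun g => 2 * th g + 3 * g) (I₀))))) = 0) := by
  refine ⟨Vand_dvd_F, ?_⟩
  rintro G hG I₀ rfl
  ext N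
  have h := sum_range_ten_picardFuchs_mul_constantCoeff hG N
  simp only [Finset.sum_range_succ, Finset.sum_range_zero, picardFuchs, Nat.zero_le, if_true,
    Nat.sub_zero] at h
  simp only [mul_assoc, map_add, map_sub, coeff_ofNat_mul, coeff_X_pow_mul_eq_boole_mul,
    coeff_X_mul_eq_boole_mul, Function.iterate_succ_apply', Function.iterate_zero_apply, coeff_th,
    PowerSeries.coeff_mk, map_zero]
  linear_combination h

end Stmt13
end
end
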